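/- arXiv:math/0112296 — 2 statements merged into one kernel-verified Lean document; each statement's English description precedes it below -/
import Mathlib

section
/- For all l₁, l₂ with a ≤ l₁ ≤ l₂ ≤ √2·a, the volume of {(A,B) ∈ C × C : l₁ ≤ dist(A,B) ≤ l₂} equals a⁶ · ∫_{l₁}^{l₂} P₂(l) dl. That is, on the interval [a, √2·a] the separation of two uniformly random points of C has probability density P₂. -/
open MeasureTheory Real Set

/-- The cube `[0,a]³` in Euclidean 3-space. -/
def cube (a : ℝ) : Set (EuclideanSpace ℝ (Fin 3)) := {x | ∀ i, x i ∈ Set.Icc 0 a}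

/-- The density of separations on the range `a ≤ l ≤ √2·a`. -/
noncomputable def P₂ (a l : ℝ) : ℝ :=
  l / a ^ 6 *
    (2 * l ^ 4 + 6 * a ^ 2 * l ^ 2 - a ^ 4 - 2 * π * a ^ 3 * (4 * l - 3 * a)
      - 8 * a * (2 * l ^ 2 + a ^ 2) * Real.sqrt (l ^ 2 - a ^ 2)
      + 24 * a ^ 2 * l ^ 2 * Real.arccos (a / l))

theorem lint_abs (f : ℝ → ENNReal) (hf : Measurable f) :
    ∫⁻ x, f |x| = 2 * ∫⁻ x in Ioi (0:ℝ), f x := by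
  have h1 : ∫⁻ x, f |x| = (∫⁻ x in Ioi (0:ℝ), f |x|) + ∫⁻ x in Iic (0:ℝ), f |x| := by
    rw [← lintegral_add_compl (fun x => f |x|) (measurableSet_Ioi (a := (0:ℝ))), compl_Ioi]
  have h2 : ∫⁻ x in Ioi (0:ℝ), f |x| = ∫⁻ x in Ioi (0:ℝ), f x :=
    setLIntegral_congr_fun measurableSet_Ioi (fun x hx => by simp [abs_of_pos (mem_Ioi.1 hx)])
  have h3 : ∫⁻ x in Iic (0:ℝ), f |x| = ∫⁻ x in Ioi (0:ℝ), f x := by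
    rw [setLIntegral_congr (Iio_ae_eq_Iic (a := (0:ℝ))).symm, ← h2]
    have := (Measure.measurePreserving_neg (volume : Measure ℝ)).setLIntegral_comp_preimage
      (s := Ioi (0:ℝ)) measurableSet_Ioi (f := fun x => f |x|) (hf.comp measurable_norm)
    rw [← this]
    simp
  rw [h1, h2, h3, two_mul]

theorem quad_polar (g : ℝ × ℝ → ENNReal) (hg : Measurable g) :
    ∫⁻ x in Ioi (0:ℝ), ∫⁻ y in Ioi (0:ℝ), g (x, y) =
      ∫⁻ r in Ioi (0:ℝ), ∫⁻ t in Ioo 0 (π/2), ENNReal.ofReal r * g (r * cos t, r * sin t) := by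
  have hm : MeasurableSet (Ioi (0:ℝ) ×ˢ Ioi (0:ℝ)) := measurableSet_Ioi.prod measurableSet_Ioi
  have hm2 : MeasurableSet (Ioi (0:ℝ) ×ˢ Ioo (0:ℝ) (π/2)) := measurableSet_Ioi.prod measurableSet_Ioo
  have e1 : ∫⁻ x in Ioi (0:ℝ), ∫⁻ y in Ioi (0:ℝ), g (x, y) =
      ∫⁻ p, (Ioi (0:ℝ) ×ˢ Ioi (0:ℝ)).indicator g p := by
    rw [lintegral_indicator hm, Measure.volume_eq_prod, ← Measure.prod_restrict,
      lintegral_prod _ hg.aemeasurable]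
  have hg2 : Measurable (fun p : ℝ × ℝ => ENNReal.ofReal p.1 * g (p.1 * cos p.2, p.1 * sin p.2)) := by
    fun_prop
  have e2 : ∫⁻ r in Ioi (0:ℝ), ∫⁻ t in Ioo 0 (π/2), ENNReal.ofReal r * g (r * cos t, r * sin t) =
      ∫⁻ p in (Ioi (0:ℝ) ×ˢ Ioo (0:ℝ) (π/2)),
        ENNReal.ofReal p.1 * g (p.1 * cos p.2, p.1 * sin p.2) := by
    rw [Measure.volume_eq_prod, ← Measure.prod_restrict, lintegral_prod _ hg2.aemeasurable]
  rw [e1, e2, ← lintegral_comp_polarCoord_symm, ← lintegral_indicator hm2,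
    ← lintegral_indicator polarCoord.open_target.measurableSet]
  refine lintegral_congr fun p => ?_
  obtain ⟨r, t⟩ := p
  have ht : polarCoord.target = Ioi (0 : ℝ) ×ˢ Ioo (-π) π := rfl
  rw [ht]
  by_cases hr : 0 < r
  swap
  · rw [indicator_of_notMem, indicator_of_notMem] <;> simp [hr]
  by_cases h : t ∈ Ioo (0:ℝ) (π/2)
  · have hc := cos_pos_of_mem_Ioo (x := t) ⟨by linarith [h.1, pi_pos], h.2⟩
    have hs := sin_pos_of_pos_of_lt_pi h.1 (by linarith [h.2, pi_pos])
    have m1 : (r, t) ∈ Ioi (0:ℝ) ×ˢ Ioo (-π) π :=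
      ⟨hr, by constructor <;> simp only [] <;> linarith [h.1, h.2, pi_pos]⟩
    have m2 : (r, t) ∈ Ioi (0:ℝ) ×ˢ Ioo (0:ℝ) (π/2) := ⟨hr, h⟩
    have m3 : (r * cos t, r * sin t) ∈ Ioi (0:ℝ) ×ˢ Ioi (0:ℝ) := ⟨mul_pos hr hc, mul_pos hr hs⟩
    rw [indicator_of_mem m1, indicator_of_mem m2, polarCoord_symm_apply, indicator_of_mem m3]
    simp
  · rw [indicator_of_notMem (s := Ioi (0:ℝ) ×ˢ Ioo (0:ℝ) (π/2)) (by simp only [mem_prod]; tauto)]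
    by_cases h2 : t ∈ Ioo (-π) π
    · have m1 : (r, t) ∈ Ioi (0:ℝ) ×ˢ Ioo (-π) π := ⟨hr, h2⟩
      rw [indicator_of_mem m1, polarCoord_symm_apply, indicator_of_notMem]
      · simp
      · rintro ⟨h3, h4⟩
        simp only [mem_Ioi] at h3 h4
        have hc : 0 < cos t := by by_contra hc; nlinarith
        have hs : 0 < sin t := by by_contra hc; nlinarith
        apply h
        constructor
        · by_contra hn
          have := sin_nonpos_of_nonpos_of_neg_pi_le (x := t) (by linarith) h2.1.le
          linarith
        · by_contra hn
          have := cos_nonpos_of_pi_div_two_le_of_le (x := t) (by linarith) (by linarith [h2.2, pi_pos])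
          linarith
    · rw [indicator_of_notMem]; simp only [mem_prod]; tauto

theorem vol_box (a : ℝ) (v : EuclideanSpace ℝ (Fin 3)) :
    volume {A : EuclideanSpace ℝ (Fin 3) | A ∈ cube a ∧ A + v ∈ cube a} =
      ∏ i, ENNReal.ofReal (a - |v i|) := by
  have hp := PiLp.volume_preserving_ofLp (Fin 3)
  have : {A : EuclideanSpace ℝ (Fin 3) | A ∈ cube a ∧ A + v ∈ cube a} =
      (WithLp.ofLp) ⁻¹' (Icc (fun i => max 0 (-v i)) (fun i => min a (a - v i))) := by
    ext A
    simp only [cube, mem_ofPred_eq, mem_Icc, PiLp.add_apply, mem_preimage, Pi.le_def, max_le_iff,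
      le_min_iff]
    constructor
    · rintro ⟨h1, h2⟩
      exact ⟨fun i => ⟨(h1 i).1, by linarith [(h2 i).1]⟩, fun i => ⟨(h1 i).2, by linarith [(h2 i).2]⟩⟩
    · rintro ⟨h1, h2⟩
      exact ⟨fun i => ⟨(h1 i).1, (h2 i).1⟩,
        fun i => ⟨by linarith [(h1 i).2], by linarith [(h2 i).2]⟩⟩
  rw [this, hp.measure_preimage measurableSet_Icc.nullMeasurableSet, Real.volume_Icc_pi]
  refine Finset.prod_congr rfl fun i _ => ?_
  congr 1
  rcases le_total 0 (v i) with h | h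
  · rw [abs_of_nonneg h, max_eq_left (by linarith), min_eq_right (by linarith)]; try ring
  · rw [abs_of_nonpos h, max_eq_right (by linarith), min_eq_left (by linarith)]; try ring

theorem meas_cube (a : ℝ) : MeasurableSet (cube a) := by
  unfold cube
  rw [ofPred_forall]
  refine MeasurableSet.iInter fun i => ?_
  have : Measurable (fun x : EuclideanSpace ℝ (Fin 3) => x i) := by fun_prop
  exact this measurableSet_Icc

/-- indicator -/
noncomputable def ind (l₁ l₂ q : ℝ) : ENNReal := (Icc (l₁ ^ 2) (l₂ ^ 2)).indicator 1 q

theorem meas_ind (l₁ l₂ : ℝ) : Measurable (ind l₁ l₂) :=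
  measurable_one.indicator measurableSet_Icc

theorem ind_sq (l₁ l₂ l : ℝ) (h1 : 0 ≤ l₁) (h2 : 0 ≤ l₂) (hl : 0 ≤ l) :
    ind l₁ l₂ (l ^ 2) = (Icc l₁ l₂).indicator 1 l := by
  unfold ind
  simp only [indicator, mem_Icc, pow_le_pow_iff_left₀ h1 hl two_ne_zero,
    pow_le_pow_iff_left₀ hl h2 two_ne_zero, Pi.one_apply]

/-- weight -/
noncomputable def wgt (a l₁ l₂ z x y : ℝ) : ENNReal :=
  ind l₁ l₂ (z^2 + (x^2 + y^2)) *
    (ENNReal.ofReal (a - z) * (ENNReal.ofReal (a - x) * ENNReal.ofReal (a - y)))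

theorem meas_wgt (a l₁ l₂ : ℝ) :
    Measurable (fun p : ℝ × ℝ × ℝ => wgt a l₁ l₂ p.1 p.2.1 p.2.2) := by
  unfold wgt
  have := meas_ind l₁ l₂
  fun_prop

theorem meas_wgt_abs (a l₁ l₂ : ℝ) :
    Measurable (fun p : ℝ × ℝ × ℝ => wgt a l₁ l₂ |p.1| |p.2.1| |p.2.2|) := by
  have hm : Measurable fun p : ℝ × ℝ × ℝ => (|p.1|, |p.2.1|, |p.2.2|) := by fun_prop
  have := (meas_wgt a l₁ l₂).comp hm
  exact this

theorem step1 (a l₁ l₂ : ℝ) (h1 : 0 ≤ l₁) (h2 : 0 ≤ l₂) :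
    volume {p : EuclideanSpace ℝ (Fin 3) × EuclideanSpace ℝ (Fin 3) |
        p.1 ∈ cube a ∧ p.2 ∈ cube a ∧ l₁ ≤ dist p.1 p.2 ∧ dist p.1 p.2 ≤ l₂} =
    ∫⁻ v : EuclideanSpace ℝ (Fin 3), wgt a l₁ l₂ |v 0| |v 1| |v 2| := by
  have hS : MeasurableSet {p : EuclideanSpace ℝ (Fin 3) × EuclideanSpace ℝ (Fin 3) |
        p.1 ∈ cube a ∧ p.2 ∈ cube a ∧ l₁ ≤ dist p.1 p.2 ∧ dist p.1 p.2 ≤ l₂} := by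
    refine MeasurableSet.inter (measurable_fst (meas_cube a)) (MeasurableSet.inter
      (measurable_snd (meas_cube a)) (MeasurableSet.inter ?_ ?_))
    · exact measurableSet_le measurable_const
        (measurable_dist (α := EuclideanSpace ℝ (Fin 3)))
    · exact measurableSet_le (measurable_dist (α := EuclideanSpace ℝ (Fin 3))) measurable_const
  have hp := measurePreserving_prod_add (volume : Measure (EuclideanSpace ℝ (Fin 3)))
    (volume : Measure (EuclideanSpace ℝ (Fin 3)))
  rw [Measure.volume_eq_prod, ← hp.measure_preimage hS.nullMeasurableSet,
    Measure.prod_apply_symm (hp.measurable hS)]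
  refine lintegral_congr fun v => ?_
  have hn : ‖v‖ ^ 2 = |v 0|^2 + (|v 1|^2 + |v 2|^2) := by
    rw [EuclideanSpace.norm_sq_eq, Fin.sum_univ_three]; simp [add_assoc]
  unfold wgt
  rw [← hn, ind_sq _ _ _ h1 h2 (norm_nonneg _)]
  have hb := vol_box a v
  rw [Fin.prod_univ_three, mul_assoc] at hb
  rw [← hb]
  by_cases h : ‖v‖ ∈ Icc l₁ l₂
  · rw [indicator_of_mem h, Pi.one_apply, one_mul]
    congr 1
    ext A
    simp [h.1, h.2]
  · rw [indicator_of_notMem h, zero_mul]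
    convert measure_empty (μ := (volume : Measure (EuclideanSpace ℝ (Fin 3))))
    ext A
    simp only [mem_preimage, mem_ofPred_eq, dist_self_add_right, mem_empty_iff_false, iff_false]
    rintro ⟨_, _, h3, h4⟩
    exact h ⟨h3, h4⟩

theorem lint_R3 (f : ℝ × ℝ × ℝ → ENNReal) (hf : Measurable f) :
    ∫⁻ v : EuclideanSpace ℝ (Fin 3), f (v 0, v 1, v 2) = ∫⁻ x, ∫⁻ y, ∫⁻ z, f (x, y, z) := by
  have hp := PiLp.volume_preserving_ofLp (Fin 3)
  have hq := volume_preserving_piFinSuccAbove (fun _ : Fin 3 => ℝ) 0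
  have hr := volume_preserving_finTwoArrow ℝ
  have h1 : ∫⁻ v : EuclideanSpace ℝ (Fin 3), f (v 0, v 1, v 2) =
      ∫⁻ v : Fin 3 → ℝ, f (v 0, v 1, v 2) :=
    hp.lintegral_comp (f := fun v : Fin 3 → ℝ => f (v 0, v 1, v 2)) (by fun_prop)
  have h2 : ∫⁻ v : Fin 3 → ℝ, f (v 0, v 1, v 2) = ∫⁻ p : ℝ × (Fin 2 → ℝ), f (p.1, p.2 0, p.2 1) := by
    rw [← hq.lintegral_comp (f := fun p : ℝ × (Fin 2 → ℝ) => f (p.1, p.2 0, p.2 1)) (by fun_prop)]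
    rfl
  rw [h1, h2, Measure.volume_eq_prod, lintegral_prod _ (by fun_prop)]
  refine lintegral_congr fun x => ?_
  have h3 : ∫⁻ v : Fin 2 → ℝ, f (x, v 0, v 1) = ∫⁻ p : ℝ × ℝ, f (x, p.1, p.2) := by
    rw [← hr.lintegral_comp (f := fun p : ℝ × ℝ => f (x, p.1, p.2)) (by fun_prop)]
    rfl
  simp only []
  rw [h3, Measure.volume_eq_prod, lintegral_prod _ (by fun_prop)]

theorem octant (f : ℝ × ℝ × ℝ → ENNReal) (hf : Measurable f) :
    ∫⁻ x, ∫⁻ y, ∫⁻ z, f (|x|, |y|, |z|) =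
    8 * ∫⁻ x in Ioi (0:ℝ), ∫⁻ y in Ioi (0:ℝ), ∫⁻ z in Ioi (0:ℝ), f (x, y, z) := by
  have m1 : Measurable (fun p : ℝ × ℝ => ∫⁻ z in Ioi (0:ℝ), f (p.1, p.2, z)) :=
    Measurable.lintegral_prod_right' (f := fun q : (ℝ × ℝ) × ℝ => f (q.1.1, q.1.2, q.2)) (by fun_prop)
  have m2 : Measurable (fun x : ℝ => ∫⁻ y in Ioi (0:ℝ), ∫⁻ z in Ioi (0:ℝ), f (x, y, z)) :=
    Measurable.lintegral_prod_right' (f := fun q : (ℝ × ℝ) => ∫⁻ z in Ioi (0:ℝ), f (q.1, q.2, z)) m1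
  have e1 : ∀ x y : ℝ, ∫⁻ z, f (|x|, |y|, |z|) = 2 * ∫⁻ z in Ioi (0:ℝ), f (|x|, |y|, z) :=
    fun x y => lint_abs (fun z => f (|x|, |y|, z)) (by fun_prop)
  have e2 : ∀ x : ℝ, ∫⁻ y, 2 * ∫⁻ z in Ioi (0:ℝ), f (|x|, |y|, z) =
      4 * ∫⁻ y in Ioi (0:ℝ), ∫⁻ z in Ioi (0:ℝ), f (|x|, y, z) := fun x => by
    rw [lintegral_const_mul' _ _ (by simp), lint_abs (fun y => ∫⁻ z in Ioi (0:ℝ), f (|x|, y, z))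
      (m1.comp (by fun_prop : Measurable (fun y : ℝ => (|x|, y)))), ← mul_assoc]
    norm_num
  simp only [e1, e2]
  rw [lintegral_const_mul' _ _ (by simp),
    lint_abs (fun x => ∫⁻ y in Ioi (0:ℝ), ∫⁻ z in Ioi (0:ℝ), f (x, y, z)) m2, ← mul_assoc]
  norm_num

/-- angular integral -/
noncomputable def hh (a s : ℝ) : ENNReal :=
  ∫⁻ t in Ioo 0 (π/2), (ENNReal.ofReal (a - s * cos t) * ENNReal.ofReal (a - s * sin t))

/-- second angular integral -/
noncomputable def kk (a l : ℝ) : ENNReal :=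
  ∫⁻ t in Ioo 0 (π/2), (ENNReal.ofReal (l * sin t) *
    (ENNReal.ofReal (a - l * cos t) * hh a (l * sin t)))

theorem meas_hh (a : ℝ) : Measurable (hh a) := by
  unfold hh
  exact Measurable.lintegral_prod_right' (f := fun p : ℝ × ℝ => 
    (ENNReal.ofReal (a - p.1 * cos p.2) * ENNReal.ofReal (a - p.1 * sin p.2))) (by fun_prop)

theorem step2a (a l₁ l₂ z : ℝ) : ∫⁻ x in Ioi (0:ℝ), ∫⁻ y in Ioi (0:ℝ), wgt a l₁ l₂ z x y =
      ∫⁻ r in Ioi (0:ℝ), ind l₁ l₂ (z^2+r^2) *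
        (ENNReal.ofReal r * (ENNReal.ofReal (a - z) * hh a r)) := by
  have hw := meas_wgt a l₁ l₂
  rw [quad_polar (fun p => wgt a l₁ l₂ z p.1 p.2)
    (hw.comp (by fun_prop : Measurable fun p : ℝ × ℝ => (z, p.1, p.2)))]
  refine lintegral_congr fun r => ?_
  have hne : ind l₁ l₂ (z^2+r^2) ≠ ⊤ := by unfold ind indicator; split_ifs <;> simp
  unfold hh
  rw [← lintegral_const_mul' _ _ ENNReal.ofReal_ne_top,
    ← lintegral_const_mul' _ _ ENNReal.ofReal_ne_top, ← lintegral_const_mul' _ _ hne]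
  refine lintegral_congr fun t => ?_
  unfold wgt
  have : (r * cos t)^2 + (r * sin t)^2 = r^2 := by
    linear_combination r^2 * sin_sq_add_cos_sq t
  simp only [this]
  ring

theorem step2b (a l₁ l₂ : ℝ) (h1 : 0 < l₁) (h2 : l₁ ≤ l₂) :
    ∫⁻ z in Ioi (0:ℝ), ∫⁻ r in Ioi (0:ℝ), ind l₁ l₂ (z^2+r^2) *
        (ENNReal.ofReal r * (ENNReal.ofReal (a - z) * hh a r)) =
    ∫⁻ l in Icc l₁ l₂, ENNReal.ofReal l * kk a l := by
  have hh' := meas_hh a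
  have hi := meas_ind l₁ l₂
  rw [quad_polar (fun p => ind l₁ l₂ (p.1^2+p.2^2) *
        (ENNReal.ofReal p.2 * (ENNReal.ofReal (a - p.1) * hh a p.2))) (by fun_prop)]
  rw [← lintegral_indicator measurableSet_Ioi, ← lintegral_indicator measurableSet_Icc]
  refine lintegral_congr fun l => ?_
  have : ∀ t : ℝ, (l * cos t)^2 + (l * sin t)^2 = l^2 := fun t => by
    linear_combination l^2 * sin_sq_add_cos_sq t
  by_cases hl : 0 < l
  · have n1 : l ∈ Ioi (0:ℝ) := hl
    rw [indicator_of_mem n1]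
    simp only [this, ind_sq _ _ _ h1.le (h1.le.trans h2) hl.le]
    by_cases h : l ∈ Icc l₁ l₂
    · simp only [indicator_of_mem h, Pi.one_apply, one_mul]
      unfold kk
      rw [lintegral_const_mul' _ _ ENNReal.ofReal_ne_top]
    · simp only [indicator_of_notMem h, zero_mul, mul_zero, lintegral_zero]
  · have n1 : l ∉ Ioi (0:ℝ) := hl
    have n2 : l ∉ Icc l₁ l₂ := fun h => hl (h1.trans_le h.1)
    rw [indicator_of_notMem n1, indicator_of_notMem n2]

theorem step2 (a l₁ l₂ : ℝ) (h1 : 0 < l₁) (h2 : l₁ ≤ l₂) :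
    volume {p : EuclideanSpace ℝ (Fin 3) × EuclideanSpace ℝ (Fin 3) |
        p.1 ∈ cube a ∧ p.2 ∈ cube a ∧ l₁ ≤ dist p.1 p.2 ∧ dist p.1 p.2 ≤ l₂} =
    8 * ∫⁻ l in Icc l₁ l₂, ENNReal.ofReal l * kk a l := by
  have hw := meas_wgt a l₁ l₂
  have hw2 : Measurable (fun p : ℝ × ℝ × ℝ => wgt a l₁ l₂ |p.1| |p.2.1| |p.2.2|) :=
    meas_wgt_abs a l₁ l₂
  have e0 := step1 a l₁ l₂ h1.le (h1.le.trans h2)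
  have e1 := lint_R3 (fun p => wgt a l₁ l₂ |p.1| |p.2.1| |p.2.2|) hw2
  have e2 := octant (fun p => wgt a l₁ l₂ p.1 p.2.1 p.2.2) hw
  have e3 := step2b a l₁ l₂ h1 h2
  simp only [step2a] at e2
  rw [e3] at e2
  rw [e0, ← e2, ← e1]

theorem lint_Ioc (f : ℝ → ℝ) (u v : ℝ) (huv : u ≤ v) (hf : Continuous f)
    (h0 : ∀ t ∈ Ioc u v, 0 ≤ f t) :
    ∫⁻ t in Ioc u v, ENNReal.ofReal (f t) = ENNReal.ofReal (∫ t in u..v, f t) := by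
  rw [intervalIntegral.integral_of_le huv, ofReal_integral_eq_lintegral_ofReal]
  · exact (hf.intervalIntegrable u v).1
  · exact (ae_restrict_mem measurableSet_Ioc).mono h0

theorem lint_sub (F : ℝ → ENNReal) (s t : Set ℝ) (hs : MeasurableSet s) (ht : MeasurableSet t)
    (hst : s ⊆ t) (h : ∀ x ∈ t, x ∉ s → F x = 0) : ∫⁻ x in t, F x = ∫⁻ x in s, F x := by
  rw [← lintegral_indicator hs, ← lintegral_indicator ht]
  refine lintegral_congr fun x => ?_
  by_cases h1 : x ∈ s
  · rw [indicator_of_mem h1, indicator_of_mem (hst h1)]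
  · rw [indicator_of_notMem h1]
    by_cases h2 : x ∈ t
    · rw [indicator_of_mem h2, h x h2 h1]
    · rw [indicator_of_notMem h2]

theorem J_int (a s u v : ℝ) : ∫ t in u..v, (a - s * cos t) * (a - s * sin t) =
    (a^2 * v - a * s * (sin v - cos v) + s^2 * sin v ^ 2 / 2) -
    (a^2 * u - a * s * (sin u - cos u) + s^2 * sin u ^ 2 / 2) := by
  have := intervalIntegral.integral_eq_sub_of_hasDerivAt (a := u) (b := v)
    (f := fun t => a^2 * t - a * s * (sin t - cos t) + s^2 * sin t ^ 2 / 2)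
    (f' := fun t => (a - s * cos t) * (a - s * sin t)) ?_ ?_
  · exact this
  · intro t _
    have h1 := ((hasDerivAt_id' t).const_mul (a^2))
    have h2 := (((hasDerivAt_sin t).sub (hasDerivAt_cos t)).const_mul (a*s))
    have h3 := ((((hasDerivAt_sin t).pow 2).const_mul (s^2)).div_const 2)
    refine ((h1.sub h2).add h3).congr_deriv ?_
    simp; ring
  · apply Continuous.intervalIntegrable; fun_prop

/-- angular integral over an interval -/
noncomputable def h1f (a s : ℝ) : ℝ := a^2 * (π/2) - 2*a*s + s^2/2
/-- angular integral over an interval -/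
noncomputable def h2f (a s : ℝ) : ℝ :=
  a^2 * (π/2 - 2 * arctan (√(s^2 - a^2)/a)) - a^2 - s^2/2 + 2*a*√(s^2 - a^2)

theorem J_lint (a s u v : ℝ) (huv : u ≤ v)
    (hc : ∀ t ∈ Ioc u v, s * cos t ≤ a) (hs : ∀ t ∈ Ioc u v, s * sin t ≤ a) :
    0 ≤ ∫ t in u..v, (a - s * cos t) * (a - s * sin t) ∧
    ∫⁻ t in Ioo u v, (ENNReal.ofReal (a - s * cos t) * ENNReal.ofReal (a - s * sin t)) =
      ENNReal.ofReal (∫ t in u..v, (a - s * cos t) * (a - s * sin t)) := by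
  have hn : ∀ t ∈ Ioc u v, 0 ≤ (a - s * cos t) * (a - s * sin t) := fun t ht =>
    mul_nonneg (by linarith [hc t ht]) (by linarith [hs t ht])
  constructor
  · rw [intervalIntegral.integral_of_le huv]
    exact setIntegral_nonneg measurableSet_Ioc hn
  · rw [← lint_Ioc _ u v huv (by fun_prop) hn, setLIntegral_congr Ioo_ae_eq_Ioc]
    refine setLIntegral_congr_fun measurableSet_Ioc fun t ht => ?_
    exact (ENNReal.ofReal_mul (by linarith [hc t ht])).symm

theorem hh_small (a s : ℝ) (h0 : 0 ≤ s) (hs : s ≤ a) :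
    0 ≤ h1f a s ∧ hh a s = ENNReal.ofReal (h1f a s) := by
  have := J_lint a s 0 (π/2) (by positivity)
    (fun t _ => by nlinarith [cos_le_one t]) (fun t _ => by nlinarith [sin_le_one t])
  have e : ∫ t in (0:ℝ)..(π/2), (a - s * cos t) * (a - s * sin t) = h1f a s := by
    rw [J_int]; simp [h1f]; ring
  rw [e] at this
  exact this

theorem arccos_form (a s : ℝ) (ha : 0 < a) (hs : a ≤ s) :
    arccos (a/s) = arctan (√(s^2 - a^2)/a) := by
  have hs0 : 0 < s := ha.trans_le hs
  rw [arccos_eq_arctan (by positivity)]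
  congr 1
  have : 1 - (a/s)^2 = (s^2 - a^2)/s^2 := by field_simp
  rw [this, sqrt_div' _ (by positivity), sqrt_sq hs0.le]
  field_simp

theorem sin_arccos_form (a s : ℝ) (ha : 0 < a) (hs : a ≤ s) :
    s * sin (arccos (a/s)) = √(s^2 - a^2) := by
  have hs0 : 0 < s := ha.trans_le hs
  rw [sin_arccos]
  have : 1 - (a/s)^2 = (s^2 - a^2)/s^2 := by field_simp
  rw [this, sqrt_div' _ (by positivity), sqrt_sq hs0.le]
  field_simp

theorem cos_arccos_form (a s : ℝ) (ha : 0 < a) (hs : a ≤ s) :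
    s * cos (arccos (a/s)) = a := by
  have hs0 : 0 < s := ha.trans_le hs
  rw [cos_arccos (by linarith [div_pos ha hs0]) (by rw [div_le_one hs0]; exact hs)]
  field_simp

theorem alpha_bd (a s : ℝ) (ha : 0 < a) (hs : a ≤ s) (hs2 : s ≤ √2 * a) :
    0 ≤ arccos (a/s) ∧ arccos (a/s) ≤ π/4 := by
  have hs0 : 0 < s := ha.trans_le hs
  refine ⟨arccos_nonneg _, ?_⟩
  rw [arccos_le_pi_div_four]
  rw [div_le_div_iff₀ (by norm_num) hs0]
  nlinarith [sq_sqrt (show (0:ℝ) ≤ 2 by norm_num), sqrt_nonneg 2]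

theorem hh_large (a s : ℝ) (ha : 0 < a) (hs : a ≤ s) (hs2 : s ≤ √2 * a) :
    0 ≤ h2f a s ∧ hh a s = ENNReal.ofReal (h2f a s) := by
  have hs0 : 0 < s := ha.trans_le hs
  obtain ⟨b0, b1⟩ := alpha_bd a s ha hs hs2
  have hC := cos_arccos_form a s ha hs
  have hS := sin_arccos_form a s ha hs
  have hA := arccos_form a s ha hs
  set α := arccos (a/s) with hα
  have hpi := pi_pos
  have key := J_lint a s α (π/2 - α) (by linarith)
    (fun t ht => by
      rw [← hC]
      exact mul_le_mul_of_nonneg_left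
        (cos_le_cos_of_nonneg_of_le_pi b0 (by linarith [ht.2]) ht.1.le) hs0.le)
    (fun t ht => by
      rw [← hC, ← sin_pi_div_two_sub α]
      exact mul_le_mul_of_nonneg_left
        (sin_le_sin_of_le_of_le_pi_div_two (by linarith [ht.1]) (by linarith) ht.2) hs0.le)
  have e : ∫ t in α..(π/2 - α), (a - s * cos t) * (a - s * sin t) = h2f a s := by
    rw [J_int, sin_pi_div_two_sub, cos_pi_div_two_sub, h2f, ← hA, ← hS]
    linear_combination (- 2 * a) * hC + (s * cos α + a) * hC - s^2/2 * (sin_sq_add_cos_sq α)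
  rw [e] at key
  refine ⟨key.1, ?_⟩
  rw [← key.2]
  unfold hh
  refine lint_sub _ _ _ measurableSet_Ioo measurableSet_Ioo
    (Ioo_subset_Ioo b0 (by linarith)) ?_
  intro t ht hn
  by_cases h : t ≤ α
  · have : a ≤ s * cos t := by
      rw [← hC]
      exact mul_le_mul_of_nonneg_left
        (cos_le_cos_of_nonneg_of_le_pi ht.1.le (by linarith) h) hs0.le
    rw [ENNReal.ofReal_of_nonpos (by linarith), zero_mul]
  · have h2 : π/2 - α ≤ t := by
      by_contra h3
      exact hn ⟨by linarith, by linarith⟩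
    have : a ≤ s * sin t := by
      rw [← hC, ← sin_pi_div_two_sub α]
      exact mul_le_mul_of_nonneg_left
        (sin_le_sin_of_le_of_le_pi_div_two (by linarith) ht.2.le h2) hs0.le
    rw [ENNReal.ofReal_of_nonpos (p := a - s * sin t) (by linarith), mul_zero]

theorem I1_int (a l u v : ℝ) :
    ∫ t in u..v, l * sin t * ((a - l * cos t) * h1f a (l * sin t)) =
    (-a^3*π/2*(l*cos v) - a^2*l^2*v + a^2*(l * sin v)*(l*cos v) - a*l^2*(l*cos v)/2
      + a*(l*cos v)^3/6 - a^2*π/4*(l*sin v)^2 + 2*a*(l*sin v)^3/3 - (l*sin v)^4/8) -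
    (-a^3*π/2*(l*cos u) - a^2*l^2*u + a^2*(l * sin u)*(l*cos u) - a*l^2*(l*cos u)/2
      + a*(l*cos u)^3/6 - a^2*π/4*(l*sin u)^2 + 2*a*(l*sin u)^3/3 - (l*sin u)^4/8) := by
  have := intervalIntegral.integral_eq_sub_of_hasDerivAt (a := u) (b := v)
    (f := fun t => -a^3*π/2*(l*cos t) - a^2*l^2*t + a^2*(l * sin t)*(l*cos t) - a*l^2*(l*cos t)/2
      + a*(l*cos t)^3/6 - a^2*π/4*(l*sin t)^2 + 2*a*(l*sin t)^3/3 - (l*sin t)^4/8)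
    (f' := fun t => l * sin t * ((a - l * cos t) * h1f a (l * sin t))) ?_ ?_
  · exact this
  · intro t _
    have hS := (hasDerivAt_sin t).const_mul l
    have hC := (hasDerivAt_cos t).const_mul l
    have k1 := hC.const_mul (-a^3*π/2)
    have k2 := (hasDerivAt_id' t).const_mul (a^2*l^2)
    have k3 := (hS.const_mul (a^2)).mul hC
    have k4 := (hC.const_mul (a*l^2)).div_const 2
    have k5 := ((hC.pow 3).const_mul a).div_const 6
    have k6 := (hS.pow 2).const_mul (a^2*π/4)
    have k7 := ((hS.pow 3).const_mul (2*a)).div_const 3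
    have k8 := (hS.pow 4).div_const 8
    refine ((((((((k1.sub k2).add k3).sub k4).add k5).sub k6).add k7).sub k8)).congr_deriv ?_
    simp only [h1f]
    norm_num
    linear_combination (a^2 * l^2 - a * l^3 * sin t / 2) * (sin_sq_add_cos_sq t)
  · apply Continuous.intervalIntegrable; unfold h1f; fun_prop

/-- integrand in z -/
noncomputable def gz (a l z : ℝ) : ℝ :=
  a^2 * (π/2 - 2 * arctan (√(l^2 - a^2 - z^2)/a)) - a^2 - (l^2-z^2)/2 + 2*a*√(l^2 - a^2 - z^2)

/-- antiderivative -/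
noncomputable def Fz (a l w z : ℝ) : ℝ :=
  a^2*π/2*(a*z - z^2/2) - 2*a^2*((a*z - z^2/2 + l^2/2) * arctan (√(l^2 - a^2 - z^2)/a)
    - a^2 * arcsin (z/w) + a*l*arcsin (a*z/(w*√(l^2-z^2))) - a*√(l^2 - a^2 - z^2)/2)
    - (a^2+l^2/2)*(a*z - z^2/2) + (a*z^3/3 - z^4/4)/2
    + 2*a*(a*(z*√(l^2 - a^2 - z^2)/2 + w^2/2*arcsin (z/w)) + √(l^2 - a^2 - z^2)^3/3)

theorem Fz_deriv (a l w z : ℝ) (ha : 0 < a) (hl : a < l) (hw0 : 0 < w) (hw : w^2 = l^2 - a^2)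
    (hz0 : 0 < z) (hz : z < w) : HasDerivAt (Fz a l w) ((a - z) * gz a l z) z := by
  have hq2 : 0 < l^2 - a^2 - z^2 := by nlinarith
  have hr2 : 0 < l^2 - z^2 := by nlinarith
  have hl0 : 0 < l := ha.trans hl
  have hz2 : HasDerivAt (fun z : ℝ => z^2) (2*z) z := by simpa using hasDerivAt_pow 2 z
  have hz3 : HasDerivAt (fun z : ℝ => z^3) (3*z^2) z := by simpa using hasDerivAt_pow 3 z
  have hz4 : HasDerivAt (fun z : ℝ => z^4) (4*z^3) z := by simpa using hasDerivAt_pow 4 z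
  have hid := hasDerivAt_id' z
  obtain ⟨q, hq⟩ : ∃ q, q = √(l^2 - a^2 - z^2) := ⟨_, rfl⟩
  obtain ⟨r, hr⟩ : ∃ r, r = √(l^2 - z^2) := ⟨_, rfl⟩
  have hq0 : 0 < q := by rw [hq]; exact sqrt_pos.2 hq2
  have hr0 : 0 < r := by rw [hr]; exact sqrt_pos.2 hr2
  have hqq : q^2 = l^2 - a^2 - z^2 := by rw [hq]; exact sq_sqrt hq2.le
  have hrr : r^2 = l^2 - z^2 := by rw [hr]; exact sq_sqrt hr2.le
  have dq : HasDerivAt (fun z => √(l^2 - a^2 - z^2)) (-z/q) z := by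
    refine ((hz2.const_sub (l^2-a^2)).sqrt hq2.ne').congr_deriv ?_
    rw [← hq]; field_simp
  have dr : HasDerivAt (fun z => √(l^2 - z^2)) (-z/r) z := by
    refine ((hz2.const_sub (l^2)).sqrt hr2.ne').congr_deriv ?_
    rw [← hr]; field_simp
  have dA : HasDerivAt (fun z => arctan (√(l^2 - a^2 - z^2)/a)) (-(a*z)/(q*r^2)) z := by
    refine (dq.div_const a).arctan.congr_deriv ?_
    rw [← hq]
    have : r^2 = a^2 + q^2 := by rw [hqq, hrr]; ring
    rw [this]
    field_simp
  have dB : HasDerivAt (fun z => arcsin (z/w)) (1/q) z := by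
    have h1 : z/w < 1 := by rw [div_lt_one hw0]; exact hz
    have h2 : 0 < z/w := by positivity
    refine ((hasDerivAt_arcsin (x := z/w) (by linarith) h1.ne).comp z (hid.div_const w)).congr_deriv ?_
    have : 1 - (z/w)^2 = (q/w)^2 := by
      field_simp; rw [hqq, hw]
    rw [this, sqrt_sq (by positivity)]
    field_simp
  have dC : HasDerivAt (fun z => arcsin (a*z/(w*√(l^2-z^2)))) (a*l/(q*r^2)) z := by
    have hsq : 1 - (a*z/(w*r))^2 = (l*q/(w*r))^2 := by
      field_simp; rw [hqq, hrr, hw]; ring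
    have h2 : 0 < a*z/(w*r) := by positivity
    have h1 : a*z/(w*r) < 1 := by
      have : 0 < (l*q/(w*r))^2 := by positivity
      nlinarith
    have hd := (hid.const_mul a).div (dr.const_mul w) (by rw [← hr]; positivity)
    have := (hasDerivAt_arcsin (x := a*z/(w*√(l^2-z^2))) (by rw [← hr]; linarith)
      (by rw [← hr]; exact h1.ne)).comp z hd
    refine this.congr_deriv ?_
    rw [← hr, hsq, sqrt_sq (by positivity)]
    have hl2 : l^2 = r^2 + z^2 := by rw [hrr]; ring
    field_simp
    linear_combination -hl2
  have d1 := (hid.const_mul a).sub (hz2.div_const 2)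
  have k1 := d1.const_mul (a^2*π/2)
  have k2 := (((((d1.add_const (l^2/2)).mul dA).sub (dB.const_mul (a^2))).add
    (dC.const_mul (a*l))).sub ((dq.const_mul a).div_const 2)).const_mul (2*a^2)
  have k3 := d1.const_mul (a^2+l^2/2)
  have k4 := (((hz3.const_mul a).div_const 3).sub (hz4.div_const 4)).div_const 2
  have k5 := (((((hid.mul dq).div_const 2).add (dB.const_mul (w^2/2))).const_mul a).add
    ((dq.pow 3).div_const 3)).const_mul (2*a)
  refine ((((k1.sub k2).sub k3).add k4).add k5).congr_deriv ?_
  simp only [gz, ← hq, Pi.sub_apply]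
  set T := arctan (q/a)
  have hr2' : r^2 = a^2+q^2 := by rw [hqq, hrr]; ring
  have hl2 : l^2 = a^2+q^2+z^2 := by rw [hqq]; ring
  have hw2' : w^2 = q^2+z^2 := by rw [hw, hqq]; ring
  have hpos : 0 < a^2+q^2 := by positivity
  have hl4 : a * l * (a*l/(q*r^2)) = a^2*(a^2+q^2+z^2)/(q*r^2) := by rw [← hl2]; ring
  rw [hl4, hl2, hw2', hr2']
  norm_num
  field_simp
  ring

theorem Fz_int (a l w : ℝ) (ha : 0 < a) (hl : a < l) (hw0 : 0 < w) (hw : w^2 = l^2 - a^2) :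
    ∫ z in (0:ℝ)..w, (a - z) * gz a l z =
    a^2*π/2*(a*w - w^2/2) - 2*a^2*(a*π*(l-a)/2 - l^2*arctan (w/a)/2 + a*w/2)
     - (a^2+l^2/2)*(a*w - w^2/2) + (a*w^3/3 - w^4/4)/2 + 2*a*(a*w^2*π/4 - w^3/3) := by
  rw [intervalIntegral.integral_eq_sub_of_hasDerivAt_of_le hw0.le (f := Fz a l w) _
    (fun z hz => Fz_deriv a l w z ha hl hw0 hw hz.1 hz.2)
    (Continuous.intervalIntegrable (by unfold gz; fun_prop) _ _)]
  · have e1 : l^2 - a^2 - w^2 = 0 := by rw [hw]; ring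
    have e2 : √(l^2 - w^2) = a := by
      rw [hw, show l^2 - (l^2 - a^2) = a^2 by ring, sqrt_sq ha.le]
    have e3 : √(l^2 - a^2) = w := by rw [← hw, sqrt_sq hw0.le]
    have e4 : a * w / (w * a) = 1 := by field_simp
    have e5 : w / w = 1 := by field_simp
    unfold Fz
    rw [e1, e2, e4, e5]
    simp [e3]
    ring
  · unfold Fz
    have hC : ContinuousOn (fun z => a*z/(w*√(l^2-z^2))) (Icc 0 w) := by
      refine ContinuousOn.div (by fun_prop) (by fun_prop) fun z hz => ?_
      have : 0 < l^2 - z^2 := by nlinarith [hz.1, hz.2]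
      have := sqrt_pos.2 this
      positivity
    have hC2 := continuous_arcsin.comp_continuousOn hC
    have hB : Continuous (fun z => arcsin (z/w)) := continuous_arcsin.comp (by fun_prop)
    have hB' := hB.continuousOn (s := Icc 0 w)
    simp only [Function.comp_def] at hC2
    fun_prop

theorem I2_int (a l : ℝ) (ha : 0 < a) (hl : a < l) :
    ∫ t in (π/2 - arccos (a/l))..(π/2), l * sin t * ((a - l * cos t) * h2f a (l * sin t)) =
    ∫ z in (0:ℝ)..√(l^2 - a^2), (a - z) * gz a l z := by
  have hS := sin_arccos_form a l ha hl.le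
  have := intervalIntegral.integral_comp_mul_deriv (a := π/2 - arccos (a/l)) (b := π/2)
    (f := fun t => l * cos t) (f' := fun t => l * (- sin t)) (g := fun z => (a - z) * gz a l z)
    (fun t _ => (hasDerivAt_cos t).const_mul l) (by fun_prop) (by unfold gz; fun_prop)
  rw [cos_pi_div_two_sub, hS, cos_pi_div_two, mul_zero] at this
  rw [intervalIntegral.integral_symm (√(l^2 - a^2)) 0, ← this, ← intervalIntegral.integral_neg]
  congr 1
  ext t
  have e1 : (l * sin t)^2 - a^2 = l^2 - a^2 - (l * cos t)^2 := by
    linear_combination l^2 * sin_sq_add_cos_sq t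
  have e2 : (l * sin t)^2 = l^2 - (l * cos t)^2 := by
    linear_combination l^2 * sin_sq_add_cos_sq t
  simp only [Function.comp_def, gz, h2f]
  rw [e1, e2]
  ring

theorem total (a l I1 I2 : ℝ) (ha : 0 < a) (hl : a < l)
    (h1 : I1 = ∫ t in (arccos (a/l))..(π/2 - arccos (a/l)),
      l * sin t * ((a - l * cos t) * h1f a (l * sin t)))
    (h2 : I2 = ∫ t in (π/2 - arccos (a/l))..(π/2),
      l * sin t * ((a - l * cos t) * h2f a (l * sin t))) :
    8 * (l * (I1 + I2)) = a^6 * P₂ a l := by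
  have hl0 : 0 < l := ha.trans hl
  have hS := sin_arccos_form a l ha hl.le
  have hC := cos_arccos_form a l ha hl.le
  have hA := arccos_form a l ha hl.le
  have hq : 0 < l^2 - a^2 := by nlinarith
  have hw0 := sqrt_pos.2 hq
  have hw := sq_sqrt hq.le
  rw [I2_int a l ha hl, Fz_int a l _ ha hl hw0 hw, ← hA] at h2
  rw [I1_int, sin_pi_div_two_sub, cos_pi_div_two_sub, hS, hC] at h1
  unfold P₂
  set w := √(l^2 - a^2)
  have w3 : w^3 = w*(l^2 - a^2) := by rw [← hw]; ring
  have w4 : w^4 = (l^2 - a^2)^2 := by rw [← hw]; ring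
  rw [hw, w3, w4] at h1 h2
  rw [h1, h2]
  field_simp
  ring

theorem kk_eq (a l : ℝ) (ha : 0 < a) (hl : a < l) (hl2 : l ≤ √2 * a) :
    0 ≤ a^6 * P₂ a l ∧
    8 * (ENNReal.ofReal l * kk a l) = ENNReal.ofReal (a^6 * P₂ a l) := by
  have hl0 : 0 < l := ha.trans hl
  have hpi := pi_pos
  obtain ⟨b0, b1⟩ := alpha_bd a l ha hl.le hl2
  have hC := cos_arccos_form a l ha hl.le
  have tot := total a l _ _ ha hl rfl rfl
  set β := arccos (a/l) with hβ
  -- facts on the ranges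
  have fc : ∀ t, β ≤ t → t ≤ π/2 → l * cos t ≤ a := fun t h1 h2 => by
    rw [← hC]
    exact mul_le_mul_of_nonneg_left
      (cos_le_cos_of_nonneg_of_le_pi b0 (by linarith) h1) hl0.le
  have fs1 : ∀ t, 0 ≤ t → t ≤ π/2 - β → l * sin t ≤ a := fun t h1 h2 => by
    rw [← hC, ← sin_pi_div_two_sub β]
    exact mul_le_mul_of_nonneg_left
      (sin_le_sin_of_le_of_le_pi_div_two (by linarith) (by linarith) h2) hl0.le
  have fs2 : ∀ t, π/2 - β ≤ t → t ≤ π/2 → a ≤ l * sin t := fun t h1 h2 => by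
    rw [← hC, ← sin_pi_div_two_sub β]
    exact mul_le_mul_of_nonneg_left
      (sin_le_sin_of_le_of_le_pi_div_two (by linarith) (by linarith) h1) hl0.le
  have fs0 : ∀ t, 0 ≤ t → t ≤ π/2 → 0 ≤ l * sin t := fun t h1 h2 =>
    mul_nonneg hl0.le (sin_nonneg_of_nonneg_of_le_pi h1 (by linarith))
  have fs3 : ∀ t, l * sin t ≤ √2 * a := fun t => by nlinarith [sin_le_one t]
  have n1 : ∀ t ∈ Ioc β (π/2 - β), 0 ≤ l * sin t * ((a - l * cos t) * h1f a (l * sin t)) :=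
    fun t ht => by
      have s0 := fs0 t (by linarith [ht.1]) (by linarith [ht.2])
      exact mul_nonneg s0 (mul_nonneg (by linarith [fc t ht.1.le (by linarith [ht.2])])
        (hh_small a _ s0 (fs1 t (by linarith [ht.1]) ht.2)).1)
  have n2 : ∀ t ∈ Ioc (π/2 - β) (π/2), 0 ≤ l * sin t * ((a - l * cos t) * h2f a (l * sin t)) :=
    fun t ht => by
      have s0 := fs0 t (by linarith [ht.1]) (by linarith [ht.2])
      exact mul_nonneg s0 (mul_nonneg (by linarith [fc t (by linarith [ht.1]) ht.2])
        (hh_large a _ ha (fs2 t ht.1.le ht.2) (fs3 t)).1)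
  have e1 := lint_Ioc _ β (π/2 - β) (by linarith) (by unfold h1f; fun_prop) n1
  have e2 := lint_Ioc _ (π/2 - β) (π/2) (by linarith) (by unfold h2f; fun_prop) n2
  have p1 : 0 ≤ ∫ t in β..(π/2 - β), l * sin t * ((a - l * cos t) * h1f a (l * sin t)) := by
    rw [intervalIntegral.integral_of_le (by linarith)]
    exact setIntegral_nonneg measurableSet_Ioc n1
  have p2 : 0 ≤ ∫ t in (π/2 - β)..(π/2), l * sin t * ((a - l * cos t) * h2f a (l * sin t)) := by
    rw [intervalIntegral.integral_of_le (by linarith)]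
    exact setIntegral_nonneg measurableSet_Ioc n2
  refine ⟨by rw [← tot]; positivity, ?_⟩
  have hk : kk a l = ENNReal.ofReal
      (∫ t in β..(π/2 - β), l * sin t * ((a - l * cos t) * h1f a (l * sin t))) +
      ENNReal.ofReal
      (∫ t in (π/2 - β)..(π/2), l * sin t * ((a - l * cos t) * h2f a (l * sin t))) := by
    rw [← e1, ← e2]
    unfold kk
    rw [lint_sub _ (Ioo β (π/2)) (Ioo 0 (π/2)) measurableSet_Ioo measurableSet_Ioo
      (Ioo_subset_Ioo_left b0), setLIntegral_congr Ioo_ae_eq_Ioc,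
      ← Ioc_union_Ioc_eq_Ioc (b := π/2 - β) (by linarith) (by linarith),
      lintegral_union measurableSet_Ioc (Ioc_disjoint_Ioc_of_le le_rfl)]
    · congr 1
      · refine setLIntegral_congr_fun measurableSet_Ioc fun t ht => ?_
        have s0 := fs0 t (by linarith [ht.1]) (by linarith [ht.2])
        rw [(hh_small a _ s0 (fs1 t (by linarith [ht.1]) ht.2)).2, ← ENNReal.ofReal_mul,
          ← ENNReal.ofReal_mul s0]
        linarith [fc t ht.1.le (by linarith [ht.2])]
      · refine setLIntegral_congr_fun measurableSet_Ioc fun t ht => ?_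
        have s0 := fs0 t (by linarith [ht.1]) (by linarith [ht.2])
        rw [(hh_large a _ ha (fs2 t ht.1.le ht.2) (fs3 t)).2, ← ENNReal.ofReal_mul,
          ← ENNReal.ofReal_mul s0]
        linarith [fc t (by linarith [ht.1]) ht.2]
    · intro t ht hn
      have h : t ≤ β := by
        by_contra h3
        exact hn ⟨by linarith, ht.2⟩
      have : a ≤ l * cos t := by
        rw [← hC]
        exact mul_le_mul_of_nonneg_left
          (cos_le_cos_of_nonneg_of_le_pi ht.1.le (by linarith) h) hl0.le
      rw [ENNReal.ofReal_of_nonpos (p := a - l * cos t) (by linarith), zero_mul, mul_zero]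
  rw [hk, ← ENNReal.ofReal_add p1 p2, ← ENNReal.ofReal_mul hl0.le, ← tot,
    ENNReal.ofReal_mul (by norm_num : (0:ℝ) ≤ 8)]
  norm_num

theorem density_on_second_range (a : ℝ) (ha : 0 < a) (l₁ l₂ : ℝ)
    (h0 : a ≤ l₁) (h12 : l₁ ≤ l₂) (h2a : l₂ ≤ Real.sqrt 2 * a) :
    volume {p : EuclideanSpace ℝ (Fin 3) × EuclideanSpace ℝ (Fin 3) |
        p.1 ∈ cube a ∧ p.2 ∈ cube a ∧ l₁ ≤ dist p.1 p.2 ∧ dist p.1 p.2 ≤ l₂} =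
      ENNReal.ofReal (a ^ 6 * ∫ l in l₁..l₂, P₂ a l) := by
  rw [step2 a l₁ l₂ (ha.trans_le h0) h12, ← lintegral_const_mul' _ _ (by simp),
    setLIntegral_congr Ioc_ae_eq_Icc.symm, ← intervalIntegral.integral_const_mul,
    intervalIntegral.integral_of_le h12, ofReal_integral_eq_lintegral_ofReal]
  · refine setLIntegral_congr_fun measurableSet_Ioc fun l hl => ?_
    exact (kk_eq a l ha (h0.trans_lt hl.1) (hl.2.trans h2a)).2
  · have hc : ContinuousOn (fun l => a^6 * P₂ a l) (Icc l₁ l₂) := by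
      have hA : ContinuousOn (fun l => arccos (a/l)) (Icc l₁ l₂) := by
        refine continuous_arccos.comp_continuousOn (continuousOn_const.div continuousOn_id ?_)
        intro l hl
        exact (ha.trans_le (h0.trans hl.1)).ne'
      unfold P₂
      fun_prop
    exact (hc.integrableOn_Icc).mono_set Ioc_subset_Icc_self
  · refine (ae_restrict_mem measurableSet_Ioc).mono fun l hl => ?_
    exact (kk_eq a l ha (h0.trans_lt hl.1) (hl.2.trans h2a)).1
end

section
/- The pushforward under the map (A,B) ↦ dist(A,B) of the product of the Lebesgue measure restricted to C with itself equals a⁶ times the measure on ℝ with density (with respect to Lebesgue measure) given by the piecewise function P, where P(l) = P₁(l) for 0 ≤ l ≤ a, P(l) = P₂(l) for a ≤ l ≤ √2·a, P(l) = P₃(l) for √2·a ≤ l ≤ √3·a, and P(l) = 0 otherwise. -/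
open MeasureTheory Real Set
/-- The density of separations on the range `0 ≤ l ≤ a`. -/
noncomputable def P₁ (a l : ℝ) : ℝ :=
  l ^ 2 * (4 * π * a ^ 3 - 6 * π * a ^ 2 * l + 8 * a * l ^ 2 - l ^ 3) / a ^ 6

/-- The density of separations on the range `√2·a ≤ l ≤ √3·a`. -/
noncomputable def P₃ (a l : ℝ) : ℝ :=
  l / a ^ 6 *
    (8 * a * (l ^ 2 + a ^ 2) * Real.sqrt (l ^ 2 - 2 * a ^ 2)
      - (l ^ 2 + a ^ 2) * (l ^ 2 + 5 * a ^ 2)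
      + 2 * π * a ^ 2 * (3 * l ^ 2 - 4 * a * l + 3 * a ^ 2)
      + 24 * a ^ 3 * l * Real.arccos (a ^ 2 / (l ^ 2 - a ^ 2))
      - 24 * a ^ 2 * (l ^ 2 + a ^ 2) * Real.arccos (a / Real.sqrt (l ^ 2 - a ^ 2)))

/-- The full piecewise probability density of separations. -/
noncomputable def P (a l : ℝ) : ℝ :=
  if l < 0 then 0
  else if l ≤ a then P₁ a l
  else if l ≤ Real.sqrt 2 * a then P₂ a l
  else if l ≤ Real.sqrt 3 * a then P₃ a l
  else 0

lemma ftc_aux {G f : ℝ → ℝ} {u v : ℝ} (huv : u ≤ v) (hc : ContinuousOn G (Icc u v))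
    (hd : ∀ z ∈ Ioo u v, HasDerivAt G (f z) z) (hf : ∀ z ∈ Ioo u v, 0 ≤ f z) :
    0 ≤ G v - G u ∧ ∫⁻ z in Ioo u v, ENNReal.ofReal (f z) = ENNReal.ofReal (G v - G u) := by
  have hint : IntegrableOn f (Ioc u v) :=
    intervalIntegral.integrableOn_deriv_of_nonneg hc hd hf
  have hI : ∫ z in u..v, f z = G v - G u :=
    intervalIntegral.integral_eq_sub_of_hasDerivAt_of_le huv hc hd
      ((intervalIntegrable_iff_integrableOn_Ioc_of_le huv).2 hint)
  rw [intervalIntegral.integral_of_le huv, integral_Ioc_eq_integral_Ioo] at hI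
  have hint' : IntegrableOn f (Ioo u v) := hint.mono_set Ioo_subset_Ioc_self
  have hnn : 0 ≤ᵐ[volume.restrict (Ioo u v)] f :=
    (ae_restrict_iff' measurableSet_Ioo).2 (Filter.Eventually.of_forall hf)
  refine ⟨?_, ?_⟩
  · rw [← hI]; exact integral_nonneg_of_ae hnn
  · rw [← hI, ofReal_integral_eq_lintegral_ofReal hint' hnn]

lemma der_sqrt {c z : ℝ} (h : z ^ 2 < c) :
    HasDerivAt (fun z => √(c - z ^ 2)) (-z / √(c - z ^ 2)) z := by
  have h1 : HasDerivAt (fun z : ℝ => c - z ^ 2) (-(2 * z)) z := by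
    simpa using ((hasDerivAt_pow 2 z).const_sub c)
  have h2 := h1.sqrt (by linarith : c - z ^ 2 ≠ 0)
  convert h2 using 1
  have : 0 < √(c - z ^ 2) := Real.sqrt_pos.2 (by linarith)
  field_simp

lemma der_arcsin {c z : ℝ} (h : z ^ 2 < c) :
    HasDerivAt (fun z => arcsin (z / √c)) (1 / √(c - z ^ 2)) z := by
  have hc : 0 < c := lt_of_le_of_lt (sq_nonneg z) h
  have hs : 0 < √c := Real.sqrt_pos.2 hc
  have hlt : |z / √c| < 1 := by
    rw [abs_div, abs_of_pos hs, div_lt_one hs, ← Real.sqrt_sq_eq_abs]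
    exact Real.sqrt_lt_sqrt (sq_nonneg z) h
  have hb := abs_lt.1 hlt
  have h1 : HasDerivAt (fun z : ℝ => z / √c) (1 / √c) z := (hasDerivAt_id z).div_const _
  have h2 := (Real.hasDerivAt_arcsin (by linarith) (by linarith)).comp z h1
  refine HasDerivAt.congr_deriv h2 ?_
  have e : 1 - (z / √c) ^ 2 = (c - z ^ 2) / c := by
    rw [div_pow, Real.sq_sqrt hc.le]; field_simp
  rw [e, Real.sqrt_div' _ hc.le]
  have : 0 < √(c - z ^ 2) := Real.sqrt_pos.2 (by linarith)
  field_simp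

lemma der_arccos {a s z : ℝ} (ha : 0 < a) (h : z ^ 2 < s - a ^ 2) :
    HasDerivAt (fun z => arccos (a / √(s - z ^ 2)))
      (-(a * z) / ((s - z ^ 2) * √(s - a ^ 2 - z ^ 2))) z := by
  have ht : a ^ 2 < s - z ^ 2 := by linarith
  have ht0 : 0 < s - z ^ 2 := lt_trans (by positivity) ht
  have hw : 0 < √(s - z ^ 2) := Real.sqrt_pos.2 ht0
  have haw : a < √(s - z ^ 2) := (Real.lt_sqrt ha.le).2 ht
  have hq : 0 < √(s - a ^ 2 - z ^ 2) := Real.sqrt_pos.2 (by linarith)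
  have hw2 : √(s - z ^ 2) ^ 2 = s - z ^ 2 := Real.sq_sqrt ht0.le
  have h1 := (hasDerivAt_const z a).div (der_sqrt (c := s) (z := z) (by linarith)) hw.ne'
  have hx1 : a / √(s - z ^ 2) < 1 := (div_lt_one hw).2 haw
  have hx0 : 0 < a / √(s - z ^ 2) := by positivity
  have h2 := (Real.hasDerivAt_arccos (by linarith) hx1.ne).comp z h1
  refine HasDerivAt.congr_deriv h2 ?_
  have e : 1 - (a / √(s - z ^ 2)) ^ 2 = (s - a ^ 2 - z ^ 2) / (s - z ^ 2) := by
    rw [div_pow, hw2]; field_simp; ring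
  rw [e, Real.sqrt_div' _ ht0.le]
  rw [show (s - z ^ 2) * √(s - a ^ 2 - z ^ 2) = √(s - z ^ 2) ^ 2 * √(s - a ^ 2 - z ^ 2) by rw [hw2]]
  field_simp
  ring

lemma der_arcsin2 {a l z : ℝ} (ha : 0 < a) (hl : 0 < l) (h : z ^ 2 < l ^ 2 - a ^ 2) :
    HasDerivAt (fun z => arcsin (a * z / (√(l ^ 2 - a ^ 2) * √(l ^ 2 - z ^ 2))))
      (a * l / ((l ^ 2 - z ^ 2) * √(l ^ 2 - a ^ 2 - z ^ 2))) z := by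
  have ht : a ^ 2 < l ^ 2 - z ^ 2 := by linarith
  have ht0 : 0 < l ^ 2 - z ^ 2 := lt_trans (by positivity) ht
  have hb0 : 0 < l ^ 2 - a ^ 2 := lt_of_le_of_lt (sq_nonneg z) h
  have hw : 0 < √(l ^ 2 - z ^ 2) := Real.sqrt_pos.2 ht0
  have hb : 0 < √(l ^ 2 - a ^ 2) := Real.sqrt_pos.2 hb0
  have hq : 0 < √(l ^ 2 - a ^ 2 - z ^ 2) := Real.sqrt_pos.2 (by linarith)
  have hw2 : √(l ^ 2 - z ^ 2) ^ 2 = l ^ 2 - z ^ 2 := Real.sq_sqrt ht0.le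
  have hb2 : √(l ^ 2 - a ^ 2) ^ 2 = l ^ 2 - a ^ 2 := Real.sq_sqrt hb0.le
  have h1 := ((hasDerivAt_id z).const_mul a).div
    ((der_sqrt (c := l ^ 2) (z := z) (by nlinarith)).const_mul (√(l ^ 2 - a ^ 2)))
    (mul_pos hb hw).ne'
  have e : 1 - (a * z / (√(l ^ 2 - a ^ 2) * √(l ^ 2 - z ^ 2))) ^ 2 =
      (l ^ 2 * (l ^ 2 - a ^ 2 - z ^ 2)) / ((√(l ^ 2 - a ^ 2) * √(l ^ 2 - z ^ 2)) ^ 2) := by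
    rw [div_pow, eq_div_iff (by positivity), sub_mul, div_mul_cancel₀ _ (by positivity), mul_pow,
      hw2, hb2]; ring
  have hlt : (a * z / (√(l ^ 2 - a ^ 2) * √(l ^ 2 - z ^ 2))) ^ 2 < 1 := by
    have : 0 < (l ^ 2 * (l ^ 2 - a ^ 2 - z ^ 2)) / ((√(l ^ 2 - a ^ 2) * √(l ^ 2 - z ^ 2)) ^ 2) := by
      have : 0 < l ^ 2 - a ^ 2 - z ^ 2 := by linarith
      positivity
    linarith
  have hbd := abs_lt.1 ((sq_lt_one_iff_abs_lt_one _).1 hlt)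
  have h2 := (Real.hasDerivAt_arcsin (x := a * z / (√(l ^ 2 - a ^ 2) * √(l ^ 2 - z ^ 2)))
    (by linarith) (by linarith)).comp z h1
  refine HasDerivAt.congr_deriv h2 ?_
  simp only [id]
  rw [e, Real.sqrt_div' _ (by positivity), Real.sqrt_sq (by positivity),
    Real.sqrt_mul (by positivity), Real.sqrt_sq hl.le]
  rw [show (l ^ 2 - z ^ 2) * √(l ^ 2 - a ^ 2 - z ^ 2)
    = √(l ^ 2 - z ^ 2) ^ 2 * √(l ^ 2 - a ^ 2 - z ^ 2) by rw [hw2]]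
  have hw3 : √(l ^ 2 - z ^ 2) ^ 2 + z ^ 2 = l ^ 2 := by rw [hw2]; ring
  generalize √(l ^ 2 - z ^ 2) = w at *
  generalize √(l ^ 2 - a ^ 2 - z ^ 2) = q at *
  generalize √(l ^ 2 - a ^ 2) = β at *
  field_simp
  linarith

/-- inner density -/
noncomputable def f2a (a t : ℝ) : ℝ := π * a ^ 2 - 4 * a * √t + t
noncomputable def f2b (a t : ℝ) : ℝ :=
  π * a ^ 2 - 2 * a ^ 2 - 4 * a ^ 2 * arccos (a / √t) + 4 * a * √(t - a ^ 2) - t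

noncomputable def G1 (a l z : ℝ) : ℝ :=
  π * a ^ 2 * (2 * a * z - z ^ 2) - 4 * a ^ 2 * (z * √(l ^ 2 - z ^ 2) + l ^ 2 * arcsin (z / √(l ^ 2)))
    - 8 * a / 3 * √(l ^ 2 - z ^ 2) ^ 3 + 2 * a * (l ^ 2 * z - z ^ 3 / 3) + (l ^ 2 - z ^ 2) ^ 2 / 2

noncomputable def G2 (a l z : ℝ) : ℝ :=
  -8 * a ^ 3 * (z * arccos (a / √(l ^ 2 - z ^ 2))
      + l * arcsin (a * z / (√(l ^ 2 - a ^ 2) * √(l ^ 2 - z ^ 2)))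
      - a * arcsin (z / √(l ^ 2 - a ^ 2)))
    - 4 * a ^ 2 * ((l ^ 2 - z ^ 2) * arccos (a / √(l ^ 2 - z ^ 2)) - a * √(l ^ 2 - a ^ 2 - z ^ 2))
    + 4 * a ^ 2 * (z * √(l ^ 2 - a ^ 2 - z ^ 2) + (l ^ 2 - a ^ 2) * arcsin (z / √(l ^ 2 - a ^ 2)))
    + 8 * a / 3 * √(l ^ 2 - a ^ 2 - z ^ 2) ^ 3 + (π - 2) * a ^ 2 * (2 * a * z - z ^ 2)
    - 2 * a * (l ^ 2 * z - z ^ 3 / 3) - (l ^ 2 - z ^ 2) ^ 2 / 2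

lemma der_G1 {a l z : ℝ} (h : z ^ 2 < l ^ 2) :
    HasDerivAt (G1 a l) (2 * (a - z) * f2a a (l ^ 2 - z ^ 2)) z := by
  have hs := der_sqrt h
  have has := der_arcsin h
  have hz := hasDerivAt_id z
  have hz2 := hasDerivAt_pow 2 z
  have hz3 := hasDerivAt_pow 3 z
  have H := ((((((hz.const_mul (2 * a)).sub hz2).const_mul (π * a ^ 2)).sub
    (((hz.mul hs).add (has.const_mul (l ^ 2))).const_mul (4 * a ^ 2))).sub
    ((hs.pow 3).const_mul (8 * a / 3))).add
    (((hz.const_mul (l ^ 2)).sub (hz3.div_const 3)).const_mul (2 * a))).add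
    (((hz2.const_sub (l ^ 2)).pow 2).div_const 2)
  refine HasDerivAt.congr_deriv (f := G1 a l) H ?_
  have hw : 0 < √(l ^ 2 - z ^ 2) := Real.sqrt_pos.2 (by linarith)
  have hw2 : √(l ^ 2 - z ^ 2) ^ 2 = l ^ 2 - z ^ 2 := Real.sq_sqrt (by linarith)
  have hl2 : l ^ 2 = √(l ^ 2 - z ^ 2) ^ 2 + z ^ 2 := by rw [hw2]; ring
  simp only [f2a, id]
  generalize √(l ^ 2 - z ^ 2) = w at *
  rw [hl2]
  push_cast
  field_simp
  ring

lemma der_G2 {a l z : ℝ} (ha : 0 < a) (hl : 0 < l) (h : z ^ 2 < l ^ 2 - a ^ 2) :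
    HasDerivAt (G2 a l) (2 * (a - z) * f2b a (l ^ 2 - z ^ 2)) z := by
  have hq' := der_sqrt h
  have has := der_arcsin h
  have hac := der_arccos ha h
  have has2 := der_arcsin2 ha hl h
  have hz := hasDerivAt_id z
  have hz2 := hasDerivAt_pow 2 z
  have hz3 := hasDerivAt_pow 3 z
  have H := (((((((((hz.mul hac).add (has2.const_mul l)).sub (has.const_mul a)).const_mul
      (-8 * a ^ 3)).sub
    ((((hz2.const_sub (l ^ 2)).mul hac).sub (hq'.const_mul a)).const_mul (4 * a ^ 2))).add
    (((hz.mul hq').add (has.const_mul (l ^ 2 - a ^ 2))).const_mul (4 * a ^ 2))).add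
    ((hq'.pow 3).const_mul (8 * a / 3))).add
    (((hz.const_mul (2 * a)).sub hz2).const_mul ((π - 2) * a ^ 2))).sub
    (((hz.const_mul (l ^ 2)).sub (hz3.div_const 3)).const_mul (2 * a))).sub
    (((hz2.const_sub (l ^ 2)).pow 2).div_const 2)
  refine HasDerivAt.congr_deriv (f := G2 a l) H ?_
  have hq : 0 < √(l ^ 2 - a ^ 2 - z ^ 2) := Real.sqrt_pos.2 (by linarith)
  have hq2 : √(l ^ 2 - a ^ 2 - z ^ 2) ^ 2 = l ^ 2 - a ^ 2 - z ^ 2 := Real.sq_sqrt (by linarith)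
  have hl2 : l ^ 2 = √(l ^ 2 - a ^ 2 - z ^ 2) ^ 2 + z ^ 2 + a ^ 2 := by rw [hq2]; ring
  simp only [f2b, id]
  rw [show l ^ 2 - z ^ 2 - a ^ 2 = l ^ 2 - a ^ 2 - z ^ 2 by ring]
  generalize √(l ^ 2 - a ^ 2 - z ^ 2) = q at *
  generalize arccos (a / √(l ^ 2 - z ^ 2)) = A at *
  have ht0 : 0 < q ^ 2 + a ^ 2 := by positivity
  rw [show l ^ 2 - z ^ 2 = q ^ 2 + a ^ 2 by rw [hl2]; ring,
    show l ^ 2 - a ^ 2 = q ^ 2 + z ^ 2 by rw [hl2]; ring]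
  rw [show l * (a * l / ((q ^ 2 + a ^ 2) * q)) = l ^ 2 * a / ((q ^ 2 + a ^ 2) * q) by ring, hl2]
  push_cast
  field_simp
  ring

lemma split_Ioo {x y z : ℝ} (hxy : x ≤ y) (hyz : y ≤ z) (F : ℝ → ENNReal) :
    ∫⁻ w in Ioo x z, F w = (∫⁻ w in Ioo x y, F w) + ∫⁻ w in Ioo y z, F w := by
  rw [setLIntegral_congr (Ioo_ae_eq_Ioc (a := x) (b := z)),
    setLIntegral_congr (Ioo_ae_eq_Ioc (a := x) (b := y)),
    setLIntegral_congr (Ioo_ae_eq_Ioc (a := y) (b := z)), ← Ioc_union_Ioc_eq_Ioc hxy hyz,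
    lintegral_union measurableSet_Ioc]
  exact Set.disjoint_left.2 (fun w hw hw' => by
    have h1 := hw.2
    have h2 := hw'.1
    linarith)

noncomputable def kd (a : ℝ) : ℝ → ENNReal :=
  (Ioo 0 (a ^ 2)).indicator (fun u => ENNReal.ofReal (a / √u - 1))

noncomputable def TT (a : ℝ) (k : ℝ → ENNReal) (t : ℝ) : ENNReal :=
  ∫⁻ z in Ioo 0 a, ENNReal.ofReal (2 * (a - z)) * k (t - z ^ 2)

noncomputable def G0 (a t z : ℝ) : ℝ :=
  2 * a ^ 2 * arcsin (z / √t) + 2 * a * √(t - z ^ 2) - 2 * a * z + z ^ 2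

lemma der_G0 {a t z : ℝ} (h : z ^ 2 < t) :
    HasDerivAt (G0 a t) (2 * (a - z) * (a / √(t - z ^ 2) - 1)) z := by
  have hs := der_sqrt h
  have has := der_arcsin h
  have hz := hasDerivAt_id z
  have hz2 := hasDerivAt_pow 2 z
  have H := (((has.const_mul (2 * a ^ 2)).add (hs.const_mul (2 * a))).sub
    (hz.const_mul (2 * a))).add hz2
  refine HasDerivAt.congr_deriv (f := G0 a t) H ?_
  have hw : 0 < √(t - z ^ 2) := Real.sqrt_pos.2 (by linarith)
  generalize √(t - z ^ 2) = w at *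
  push_cast
  field_simp
  ring

lemma cont_G0 (a t : ℝ) : Continuous (G0 a t) := by unfold G0; fun_prop

lemma kd_piece {a t u v : ℝ} (ha : 0 < a) (hu : 0 ≤ u) (huv : u ≤ v) (hva : v ≤ a)
    (h1 : t - a ^ 2 ≤ u ^ 2) (h2 : v ^ 2 ≤ t) :
    0 ≤ G0 a t v - G0 a t u ∧
    ∫⁻ z in Ioo u v, ENNReal.ofReal (2 * (a - z)) * kd a (t - z ^ 2) =
      ENNReal.ofReal (G0 a t v - G0 a t u) := by
  have key : ∀ z ∈ Ioo u v, 0 < t - z ^ 2 ∧ t - z ^ 2 < a ^ 2 ∧ z < a := by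
    intro z hz
    have := hz.1
    have := hz.2
    refine ⟨by nlinarith, by nlinarith, by linarith⟩
  have hk : ∀ z ∈ Ioo u v, 0 ≤ a / √(t - z ^ 2) - 1 := by
    intro z hz
    obtain ⟨k1, k2, k3⟩ := key z hz
    have hw : 0 < √(t - z ^ 2) := Real.sqrt_pos.2 k1
    have : √(t - z ^ 2) ≤ a := by
      rw [Real.sqrt_le_left ha.le]; exact k2.le
    rw [sub_nonneg, le_div_iff₀ hw]; linarith
  have := ftc_aux (G := G0 a t) (f := fun z => 2 * (a - z) * (a / √(t - z ^ 2) - 1)) huv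
    (cont_G0 a t).continuousOn (fun z hz => der_G0 (by linarith [(key z hz).1]))
    (fun z hz => mul_nonneg (by linarith [(key z hz).2.2]) (hk z hz))
  refine ⟨this.1, ?_⟩
  rw [← this.2]
  refine setLIntegral_congr_fun measurableSet_Ioo (fun z hz => ?_)
  obtain ⟨k1, k2, k3⟩ := key z hz
  simp only [kd]
  rw [indicator_of_mem (show t - z ^ 2 ∈ Ioo 0 (a ^ 2) from ⟨k1, k2⟩),
    ← ENNReal.ofReal_mul (by linarith)]

lemma kd_zero {a t u v : ℝ} (h : ∀ z ∈ Ioo u v, t - z ^ 2 ≤ 0 ∨ a ^ 2 ≤ t - z ^ 2) :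
    ∫⁻ z in Ioo u v, ENNReal.ofReal (2 * (a - z)) * kd a (t - z ^ 2) = 0 := by
  rw [setLIntegral_congr_fun (g := fun _ => 0) measurableSet_Ioo, lintegral_zero]
  intro z hz
  simp only [kd]
  rw [indicator_of_notMem, mul_zero]
  rintro ⟨h1, h2⟩
  rcases h z hz with h | h <;> linarith

lemma K2a {a t : ℝ} (ha : 0 < a) (ht : 0 < t) (hta : t ≤ a ^ 2) :
    0 ≤ f2a a t ∧ TT a (kd a) t = ENNReal.ofReal (f2a a t) := by
  have hs : 0 < √t := Real.sqrt_pos.2 ht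
  have hs2 : √t ^ 2 = t := Real.sq_sqrt ht.le
  have hsa : √t ≤ a := by rw [Real.sqrt_le_left ha.le]; exact hta
  have := kd_piece (t := t) ha le_rfl hs.le hsa (by linarith) (by linarith)
  have e : G0 a t √t - G0 a t 0 = f2a a t := by
    simp only [G0, f2a, div_self hs.ne', Real.arcsin_one, hs2, sub_self, Real.sqrt_zero, zero_div,
      Real.arcsin_zero]
    norm_num
    ring
  rw [e] at this
  refine ⟨this.1, ?_⟩
  rw [TT, split_Ioo hs.le hsa, this.2, kd_zero, add_zero]
  intro z hz
  left
  have := hz.1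
  nlinarith

lemma arcsin_div_eq {x c y : ℝ} (hc : 0 < c) (hy : 0 ≤ y) (h : x ^ 2 + y ^ 2 = c ^ 2)
    (hx : 0 ≤ x) :
    arcsin (x / c) = arccos (y / c) := by
  rw [Real.arccos_eq_arcsin (by positivity)]
  congr 1
  rw [eq_comm, Real.sqrt_eq_iff_mul_self_eq]
  · field_simp; linarith
  · rw [sub_nonneg, div_pow, div_le_one (by positivity)]; nlinarith
  · positivity

lemma K2b {a t : ℝ} (ha : 0 < a) (hta : a ^ 2 < t) (ht : t ≤ 2 * a ^ 2) :
    0 ≤ f2b a t ∧ TT a (kd a) t = ENNReal.ofReal (f2b a t) := by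
  have ht0 : 0 < t := lt_trans (by positivity) hta
  have hs : 0 < √t := Real.sqrt_pos.2 ht0
  have hs2 : √t ^ 2 = t := Real.sq_sqrt ht0.le
  have hq : 0 < √(t - a ^ 2) := Real.sqrt_pos.2 (by linarith)
  have hq2 : √(t - a ^ 2) ^ 2 = t - a ^ 2 := Real.sq_sqrt (by linarith)
  have hqa : √(t - a ^ 2) ≤ a := by rw [Real.sqrt_le_left ha.le]; linarith
  have := kd_piece (t := t) ha hq.le hqa le_rfl (by linarith) (by linarith)
  have e : G0 a t a - G0 a t √(t - a ^ 2) = f2b a t := by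
    simp only [G0, f2b]
    rw [hq2, arcsin_div_eq hs ha.le (by rw [hq2, hs2]; ring) hq.le,
      show t - (t - a ^ 2) = a ^ 2 by ring, Real.sqrt_sq ha.le,
      Real.arcsin_eq_pi_div_two_sub_arccos]
    ring
  rw [e] at this
  refine ⟨this.1, ?_⟩
  rw [TT, split_Ioo hq.le hqa, this.2, kd_zero, zero_add]
  intro z hz
  right
  have := hz.1
  have := hz.2
  nlinarith

lemma K2c {a t : ℝ} (ha : 0 < a) (h : t ≤ 0 ∨ 2 * a ^ 2 < t) : TT a (kd a) t = 0 := by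
  rw [TT, kd_zero]
  intro z hz
  have := hz.1
  have := hz.2
  rcases h with h | h
  · left; nlinarith
  · right; nlinarith

lemma cont_G1 (a l : ℝ) : Continuous (G1 a l) := by unfold G1; fun_prop

lemma cont_G2 {a l u v : ℝ} (ha : 0 < a) (hl : a < l) (hu : 0 ≤ u) (hv : v ^ 2 ≤ l ^ 2 - a ^ 2) :
    ContinuousOn (G2 a l) (Icc u v) := by
  have h1 : ∀ z ∈ Icc u v, √(l ^ 2 - z ^ 2) ≠ 0 := by
    intro z hz
    have := hz.1
    have := hz.2
    exact (Real.sqrt_pos.2 (by nlinarith)).ne'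
  have h2 : ∀ z ∈ Icc u v, √(l ^ 2 - a ^ 2) * √(l ^ 2 - z ^ 2) ≠ 0 := by
    intro z hz
    exact mul_ne_zero (Real.sqrt_pos.2 (by nlinarith)).ne' (h1 z hz)
  have c1 : ContinuousOn (fun z => arccos (a / √(l ^ 2 - z ^ 2))) (Icc u v) :=
    Real.continuous_arccos.comp_continuousOn
      (continuousOn_const.div (by fun_prop) h1)
  have c2 : ContinuousOn (fun z => arcsin (a * z / (√(l ^ 2 - a ^ 2) * √(l ^ 2 - z ^ 2))))
      (Icc u v) :=
    Real.continuous_arcsin.comp_continuousOn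
      (ContinuousOn.div (by fun_prop) (by fun_prop) h2)
  unfold G2
  fun_prop

lemma G1_piece {a l u v : ℝ} (ha : 0 < a) (hu : 0 ≤ u) (huv : u ≤ v) (hva : v ≤ a)
    (h1 : l ^ 2 - a ^ 2 ≤ u ^ 2) (h2 : v ^ 2 ≤ l ^ 2) :
    0 ≤ G1 a l v - G1 a l u ∧
    ∫⁻ z in Ioo u v, ENNReal.ofReal (2 * (a - z)) * TT a (kd a) (l ^ 2 - z ^ 2) =
      ENNReal.ofReal (G1 a l v - G1 a l u) := by
  have key : ∀ z ∈ Ioo u v, 0 < l ^ 2 - z ^ 2 ∧ l ^ 2 - z ^ 2 ≤ a ^ 2 ∧ z < a := by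
    intro z hz
    have := hz.1
    have := hz.2
    refine ⟨by nlinarith, by nlinarith, by linarith⟩
  have hk := fun z hz => K2a ha (key z hz).1 (key z hz).2.1
  have := ftc_aux (G := G1 a l) (f := fun z => 2 * (a - z) * f2a a (l ^ 2 - z ^ 2)) huv
    (cont_G1 a l).continuousOn (fun z hz => der_G1 (by linarith [(key z hz).1]))
    (fun z hz => mul_nonneg (by linarith [(key z hz).2.2]) (hk z hz).1)
  refine ⟨this.1, ?_⟩
  rw [← this.2]
  refine setLIntegral_congr_fun measurableSet_Ioo (fun z hz => ?_)
  rw [(hk z hz).2, ← ENNReal.ofReal_mul (by linarith [(key z hz).2.2])]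

lemma G2_piece {a l u v : ℝ} (ha : 0 < a) (hal : a < l) (hu : 0 ≤ u) (huv : u ≤ v) (hva : v ≤ a)
    (h1 : l ^ 2 - 2 * a ^ 2 ≤ u ^ 2) (h2 : v ^ 2 ≤ l ^ 2 - a ^ 2) :
    0 ≤ G2 a l v - G2 a l u ∧
    ∫⁻ z in Ioo u v, ENNReal.ofReal (2 * (a - z)) * TT a (kd a) (l ^ 2 - z ^ 2) =
      ENNReal.ofReal (G2 a l v - G2 a l u) := by
  have key : ∀ z ∈ Ioo u v, a ^ 2 < l ^ 2 - z ^ 2 ∧ l ^ 2 - z ^ 2 ≤ 2 * a ^ 2 ∧ z < a := by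
    intro z hz
    have := hz.1
    have := hz.2
    refine ⟨by nlinarith, by nlinarith, by linarith⟩
  have hk := fun z hz => K2b ha (key z hz).1 (key z hz).2.1
  have := ftc_aux (G := G2 a l) (f := fun z => 2 * (a - z) * f2b a (l ^ 2 - z ^ 2)) huv
    (cont_G2 ha hal hu h2)
    (fun z hz => der_G2 ha (by linarith) (by linarith [(key z hz).1]))
    (fun z hz => mul_nonneg (by linarith [(key z hz).2.2]) (hk z hz).1)
  refine ⟨this.1, ?_⟩
  rw [← this.2]
  refine setLIntegral_congr_fun measurableSet_Ioo (fun z hz => ?_)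
  rw [(hk z hz).2, ← ENNReal.ofReal_mul (by linarith [(key z hz).2.2])]

lemma TT_zero {a l u v : ℝ} (ha : 0 < a)
    (h : ∀ z ∈ Ioo u v, l ^ 2 - z ^ 2 ≤ 0 ∨ 2 * a ^ 2 < l ^ 2 - z ^ 2) :
    ∫⁻ z in Ioo u v, ENNReal.ofReal (2 * (a - z)) * TT a (kd a) (l ^ 2 - z ^ 2) = 0 := by
  rw [setLIntegral_congr_fun (g := fun _ => 0) measurableSet_Ioo, lintegral_zero]
  intro z hz
  simp only
  rw [K2c ha (h z hz), mul_zero]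

lemma K3a {a l : ℝ} (ha : 0 < a) (hl : 0 < l) (hla : l ≤ a) :
    ENNReal.ofReal (2 * l) * TT a (TT a (kd a)) (l ^ 2) = ENNReal.ofReal (a ^ 6 * P₁ a l) := by
  have := G1_piece (l := l) ha le_rfl hl.le hla (by nlinarith) le_rfl
  rw [TT, split_Ioo hl.le hla, this.2, TT_zero ha, add_zero, ← ENNReal.ofReal_mul (by linarith)]
  · congr 1
    simp only [G1, P₁, sub_self, Real.sqrt_zero, Real.sqrt_sq hl.le, div_self hl.ne',
      Real.arcsin_one, zero_div, Real.arcsin_zero]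
    norm_num
    rw [Real.sqrt_sq hl.le]
    field_simp
    ring
  · intro z hz
    left
    have := hz.1
    nlinarith

lemma K3b {a l : ℝ} (ha : 0 < a) (hal : a < l) (hl2 : l ^ 2 ≤ 2 * a ^ 2) :
    ENNReal.ofReal (2 * l) * TT a (TT a (kd a)) (l ^ 2) = ENNReal.ofReal (a ^ 6 * P₂ a l) := by
  have hl : 0 < l := ha.trans hal
  have hb0 : 0 < l ^ 2 - a ^ 2 := by nlinarith
  have hb : 0 < √(l ^ 2 - a ^ 2) := Real.sqrt_pos.2 hb0
  have hb2 : √(l ^ 2 - a ^ 2) ^ 2 = l ^ 2 - a ^ 2 := Real.sq_sqrt hb0.le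
  have hba : √(l ^ 2 - a ^ 2) ≤ a := by rw [Real.sqrt_le_left ha.le]; linarith
  have p2 := G2_piece (l := l) ha hal le_rfl hb.le hba (by linarith) hb2.le
  have p1 := G1_piece (l := l) ha hb.le hba le_rfl hb2.ge (by nlinarith)
  rw [TT, split_Ioo hb.le hba, p2.2, p1.2, ← ENNReal.ofReal_add p2.1 p1.1,
    ← ENNReal.ofReal_mul (by linarith)]
  congr 1
  have e1 : arcsin (a / l) = π / 2 - arccos (a / l) := Real.arcsin_eq_pi_div_two_sub_arccos _
  have e2 : arcsin (√(l ^ 2 - a ^ 2) / l) = arccos (a / l) :=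
    arcsin_div_eq hl ha.le (by rw [hb2]; ring) hb.le
  simp only [G1, G2, P₂, Real.sqrt_sq hl.le, hb2, e1, e2,
    show l ^ 2 - (l ^ 2 - a ^ 2) = a ^ 2 by ring, Real.sqrt_sq ha.le, div_self ha.ne',
    sub_self, Real.sqrt_zero, div_self hb.ne', Real.arcsin_one, Real.arccos_one, zero_div,
    Real.arcsin_zero, mul_comm a √(l ^ 2 - a ^ 2), div_self (mul_pos hb ha).ne', mul_zero,
    zero_mul, ne_eq, OfNat.ofNat_ne_zero, not_false_eq_true, zero_pow, sub_zero, add_zero]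
  have hb3 : √(l ^ 2 - a ^ 2) ^ 3 = (l ^ 2 - a ^ 2) * √(l ^ 2 - a ^ 2) := by
    rw [pow_succ, hb2]
  rw [hb3]
  generalize √(l ^ 2 - a ^ 2) = β at *
  generalize arccos (a / l) = A at *
  field_simp
  ring_nf

lemma K3c {a l : ℝ} (ha : 0 < a) (hl0 : 0 < l) (hl2 : 2 * a ^ 2 < l ^ 2) (hl3 : l ^ 2 ≤ 3 * a ^ 2) :
    ENNReal.ofReal (2 * l) * TT a (TT a (kd a)) (l ^ 2) = ENNReal.ofReal (a ^ 6 * P₃ a l) := by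
  have hal : a < l := by nlinarith
  have hb0 : 0 < l ^ 2 - a ^ 2 := by nlinarith
  have hb : 0 < √(l ^ 2 - a ^ 2) := Real.sqrt_pos.2 hb0
  have hb2 : √(l ^ 2 - a ^ 2) ^ 2 = l ^ 2 - a ^ 2 := Real.sq_sqrt hb0.le
  have hr0 : 0 < l ^ 2 - 2 * a ^ 2 := by linarith
  have hr : 0 < √(l ^ 2 - 2 * a ^ 2) := Real.sqrt_pos.2 hr0
  have hr2 : √(l ^ 2 - 2 * a ^ 2) ^ 2 = l ^ 2 - 2 * a ^ 2 := Real.sq_sqrt hr0.le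
  have hra : √(l ^ 2 - 2 * a ^ 2) ≤ a := by rw [Real.sqrt_le_left ha.le]; linarith
  have p2 := G2_piece (l := l) ha hal hr.le hra le_rfl (by linarith) (by linarith)
  rw [TT, split_Ioo hr.le hra, p2.2, TT_zero ha, zero_add, ← ENNReal.ofReal_mul (by linarith)]
  · congr 1
    have e1 : arcsin (a / √(l ^ 2 - a ^ 2)) = π / 2 - arccos (a / √(l ^ 2 - a ^ 2)) :=
      Real.arcsin_eq_pi_div_two_sub_arccos _
    have e2 : arcsin (√(l ^ 2 - 2 * a ^ 2) / √(l ^ 2 - a ^ 2)) = arccos (a / √(l ^ 2 - a ^ 2)) :=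
      arcsin_div_eq hb ha.le (by rw [hb2, hr2]; ring) hr.le
    have h2 : √(2 * a ^ 2) = √2 * a := by
      rw [Real.sqrt_mul (by norm_num), Real.sqrt_sq ha.le]
    have hs2 : 0 < √(2 : ℝ) := by positivity
    have hs22 : √(2 : ℝ) ^ 2 = 2 := Real.sq_sqrt (by norm_num)
    have e3 : arccos (a / (√2 * a)) = π / 4 := by
      rw [show a / (√2 * a) = √2 / 2 by field_simp; linarith, ← Real.cos_pi_div_four,
        Real.arccos_cos] <;> linarith [Real.pi_pos]
    have e4 : arcsin (a * a / (√(l ^ 2 - a ^ 2) * √(l ^ 2 - a ^ 2))) =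
        π / 2 - arccos (a ^ 2 / (l ^ 2 - a ^ 2)) := by
      rw [← sq, ← sq, hb2]; exact Real.arcsin_eq_pi_div_two_sub_arccos _
    have e5 : arcsin (a * √(l ^ 2 - 2 * a ^ 2) / (√(l ^ 2 - a ^ 2) * (√2 * a))) =
        arccos (a ^ 2 / (l ^ 2 - a ^ 2)) / 2 := by
      have hx0 : 0 < a ^ 2 / (l ^ 2 - a ^ 2) := by positivity
      have hx1 : a ^ 2 / (l ^ 2 - a ^ 2) ≤ 1 := by rw [div_le_one hb0]; linarith
      have n0 := Real.arccos_nonneg (a ^ 2 / (l ^ 2 - a ^ 2))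
      have n1 := Real.arccos_le_pi (a ^ 2 / (l ^ 2 - a ^ 2))
      apply Real.arcsin_eq_of_sin_eq
      · have hsn : 0 ≤ Real.sin (arccos (a ^ 2 / (l ^ 2 - a ^ 2)) / 2) :=
          Real.sin_nonneg_of_nonneg_of_le_pi (by linarith) (by linarith)
        rw [← sq_eq_sq₀ hsn (by positivity), Real.sin_sq_eq_half_sub,
          show 2 * (arccos (a ^ 2 / (l ^ 2 - a ^ 2)) / 2) = arccos (a ^ 2 / (l ^ 2 - a ^ 2)) by ring,
          Real.cos_arccos (by linarith) hx1, div_pow, mul_pow, mul_pow, mul_pow, hb2, hr2, hs22]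
        field_simp
        ring
      · constructor <;> linarith
    simp only [G2, P₃, hr2, show l ^ 2 - (l ^ 2 - 2 * a ^ 2) = 2 * a ^ 2 by ring,
      show l ^ 2 - a ^ 2 - (l ^ 2 - 2 * a ^ 2) = a ^ 2 by ring,
      show l ^ 2 - a ^ 2 - a ^ 2 = l ^ 2 - 2 * a ^ 2 by ring, h2, Real.sqrt_sq ha.le, e1, e2, e3,
      e4, e5]
    have hr3 : √(l ^ 2 - 2 * a ^ 2) ^ 3 = (l ^ 2 - 2 * a ^ 2) * √(l ^ 2 - 2 * a ^ 2) := by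
      rw [pow_succ, hr2]
    rw [hr3]
    generalize √(l ^ 2 - 2 * a ^ 2) = r at *
    generalize arccos (a ^ 2 / (l ^ 2 - a ^ 2)) = A at *
    generalize arccos (a / √(l ^ 2 - a ^ 2)) = B at *
    have hr3' : r ^ 3 = (l ^ 2 - 2 * a ^ 2) * r := by rw [← hr2]; ring
    field_simp
    ring_nf
    try rw [hr3']
    try ring_nf
  · intro z hz
    right
    have := hz.1
    have := hz.2
    nlinarith

lemma K3d {a l : ℝ} (ha : 0 < a) (h : 3 * a ^ 2 < l ^ 2) :
    TT a (TT a (kd a)) (l ^ 2) = 0 := by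
  rw [TT, TT_zero ha]
  intro z hz
  right
  have := hz.1
  have := hz.2
  nlinarith

lemma K3 {a l : ℝ} (ha : 0 < a) (hl : 0 < l) :
    ENNReal.ofReal (2 * l) * TT a (TT a (kd a)) (l ^ 2) =
      ENNReal.ofReal (a ^ 6) * ENNReal.ofReal (P a l) := by
  rw [← ENNReal.ofReal_mul (by positivity)]
  have h2 : (√2 * a) ^ 2 = 2 * a ^ 2 := by rw [mul_pow, Real.sq_sqrt (by norm_num)]
  have h3 : (√3 * a) ^ 2 = 3 * a ^ 2 := by rw [mul_pow, Real.sq_sqrt (by norm_num)]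
  have p2 : 0 < √2 * a := by positivity
  have p3 : 0 < √3 * a := by positivity
  unfold P
  split_ifs with c0 c1 c2 c3
  · linarith
  · exact K3a ha hl c1
  · exact K3b ha (by linarith) (by rw [← h2]; gcongr)
  · exact K3c ha hl (by rw [← h2]; gcongr; linarith) (by rw [← h3]; gcongr)
  · rw [K3d ha (by rw [← h3]; gcongr; linarith)]; simp

noncomputable def mu1 (a : ℝ) : Measure ℝ :=
  Measure.map (fun p : ℝ × ℝ => (p.1 - p.2) ^ 2)
    ((volume.restrict (Icc 0 a)).prod (volume.restrict (Icc 0 a)))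

lemma lint_mu1 {a : ℝ} (ψ : ℝ → ENNReal) (hψ : Measurable ψ) :
    ∫⁻ u, ψ u ∂(mu1 a) = ∫⁻ z in Ioo 0 a, ENNReal.ofReal (2 * (a - z)) * ψ (z ^ 2) := by
  rw [mu1, lintegral_map hψ (by fun_prop), lintegral_prod _ (by fun_prop)]
  have h1 : ∀ x, ∫⁻ y in Icc 0 a, ψ ((x - y) ^ 2) =
      ∫⁻ d, (Icc 0 a).indicator (fun _ => (1 : ENNReal)) (x - d) * ψ (d ^ 2) := by
    intro x
    rw [← lintegral_sub_left_eq_self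
      (fun d => (Icc 0 a).indicator (fun _ => (1 : ENNReal)) (x - d) * ψ (d ^ 2)) x,
      ← lintegral_indicator measurableSet_Icc]
    congr 1
    ext y
    simp only [sub_sub_cancel]
    by_cases hy : y ∈ Icc 0 a <;> simp [hy]
  simp only [h1]
  rw [lintegral_lintegral_swap]
  swap
  · apply Measurable.aemeasurable
    apply Measurable.mul
    · exact (measurable_const.indicator measurableSet_Icc).comp (by fun_prop)
    · exact hψ.comp (by fun_prop)
  have h2 : ∀ d, ∫⁻ x in Icc 0 a, (Icc 0 a).indicator (fun _ => (1 : ENNReal)) (x - d) * ψ (d ^ 2) =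
      ENNReal.ofReal (a - |d|) * ψ (d ^ 2) := by
    intro d
    rw [lintegral_mul_const]
    swap
    · exact (measurable_const.indicator measurableSet_Icc).comp (by fun_prop)
    congr 1
    have : (fun x => (Icc 0 a).indicator (fun _ => (1 : ENNReal)) (x - d)) =
        (Icc d (a + d)).indicator 1 := by
      ext x
      simp only [indicator, mem_Icc, Pi.one_apply]
      congr 1
      rw [eq_iff_iff]
      constructor <;> rintro ⟨h, h'⟩ <;> constructor <;> linarith
    rw [this, lintegral_indicator_one measurableSet_Icc,
      Measure.restrict_apply measurableSet_Icc, Icc_inter_Icc, Real.volume_Icc]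
    congr 1
    rcases le_total 0 d with h | h
    · rw [abs_of_nonneg h, max_eq_left h, min_eq_right (by linarith)]
    · rw [abs_of_nonpos h, max_eq_right h, min_eq_left (by linarith)]; ring
  simp only [h2]
  have hm : Measurable (fun d : ℝ => ENNReal.ofReal (a - |d|) * ψ (d ^ 2)) := by fun_prop
  rw [← lintegral_add_compl _ (measurableSet_Ioi (a := (0 : ℝ)))]
  have h3 : ∫⁻ d in (Ioi (0 : ℝ))ᶜ, ENNReal.ofReal (a - |d|) * ψ (d ^ 2) =
      ∫⁻ d in Ioi (0 : ℝ), ENNReal.ofReal (a - |d|) * ψ (d ^ 2) := by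
    rw [compl_Ioi, setLIntegral_congr Iio_ae_eq_Iic.symm, ← lintegral_indicator measurableSet_Iio,
      ← lintegral_indicator measurableSet_Ioi, ← lintegral_neg_eq_self]
    congr 1
    ext d
    simp [indicator]
  rw [h3, ← two_mul, ← lintegral_const_mul _ hm, ← lintegral_indicator measurableSet_Ioi,
    ← lintegral_indicator measurableSet_Ioo]
  congr 1
  ext d
  simp only [indicator, mem_Ioi, mem_Ioo]
  by_cases hd : 0 < d
  · by_cases hda : d < a
    · simp only [hd, hda, and_self, if_true, abs_of_pos hd]
      rw [ENNReal.ofReal_mul (by norm_num), mul_assoc]; simp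
    · simp only [hd, hda, and_false, if_true, if_false, abs_of_pos hd]
      rw [ENNReal.ofReal_of_nonpos (by linarith)]; simp
  · simp [hd]

lemma lint_sq {b : ℝ} (hb : 0 ≤ b) (g : ℝ → ENNReal) :
    ∫⁻ u in Ioo 0 (b ^ 2), g u = ∫⁻ z in Ioo 0 b, ENNReal.ofReal (2 * z) * g (z ^ 2) := by
  have himg : (fun z : ℝ => z ^ 2) '' Ioo 0 b = Ioo 0 (b ^ 2) := by
    ext u
    constructor
    · rintro ⟨z, ⟨h1, h2⟩, rfl⟩
      exact ⟨by positivity, by simp only; gcongr⟩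
    · rintro ⟨h1, h2⟩
      exact ⟨√u, ⟨Real.sqrt_pos.2 h1, (Real.sqrt_lt' (by nlinarith [hb.lt_of_ne (by rintro rfl; simp at h2; linarith)])).2 h2⟩,
        Real.sq_sqrt h1.le⟩
  rw [← himg, lintegral_image_eq_lintegral_abs_deriv_mul measurableSet_Ioo
    (f' := fun z => 2 * z)]
  · refine setLIntegral_congr_fun measurableSet_Ioo (fun z hz => ?_)
    have := hz.1
    rw [abs_of_nonneg (by linarith)]
  · intro z hz
    simpa using (hasDerivAt_pow 2 z).hasDerivWithinAt
  · intro x hx y hy h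
    exact (sq_eq_sq₀ hx.1.le hy.1.le).1 h

lemma lint_sq_Ioi (g : ℝ → ENNReal) :
    ∫⁻ u in Ioi 0, g u = ∫⁻ z in Ioi 0, ENNReal.ofReal (2 * z) * g (z ^ 2) := by
  have himg : (fun z : ℝ => z ^ 2) '' Ioi 0 = Ioi 0 := by
    ext u
    constructor
    · rintro ⟨z, h1, rfl⟩
      have : 0 < z := h1
      exact pow_pos this 2
    · intro h1
      exact ⟨√u, Real.sqrt_pos.2 h1, Real.sq_sqrt (le_of_lt h1)⟩
  conv_lhs => rw [← himg]
  rw [lintegral_image_eq_lintegral_abs_deriv_mul measurableSet_Ioi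
    (f' := fun z => 2 * z)]
  · refine setLIntegral_congr_fun measurableSet_Ioi (fun z hz => ?_)
    have : 0 < z := hz
    rw [abs_of_nonneg (by linarith)]
  · intro z hz
    simpa using (hasDerivAt_pow 2 z).hasDerivWithinAt
  · intro x hx y hy h
    exact (sq_eq_sq₀ (le_of_lt hx) (le_of_lt hy)).1 h

lemma meas_kd (a : ℝ) : Measurable (kd a) := by
  unfold kd
  exact Measurable.indicator (by fun_prop) measurableSet_Ioo

lemma meas_TT (a : ℝ) {k : ℝ → ENNReal} (hk : Measurable k) : Measurable (TT a k) := by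
  unfold TT
  apply Measurable.lintegral_prod_right
  fun_prop

lemma mu1_eq {a : ℝ} (ha : 0 < a) : mu1 a = volume.withDensity (kd a) := by
  apply Measure.ext_of_lintegral
  intro ψ hψ
  rw [lint_mu1 ψ hψ, lintegral_withDensity_eq_lintegral_mul _ (meas_kd a) hψ]
  have : (kd a * ψ) = (Ioo 0 (a ^ 2)).indicator (fun u => ENNReal.ofReal (a / √u - 1) * ψ u) := by
    ext u
    simp only [kd, Pi.mul_apply, indicator]
    split_ifs <;> simp
  rw [this, lintegral_indicator measurableSet_Ioo, lint_sq ha.le]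
  refine setLIntegral_congr_fun measurableSet_Ioo (fun z hz => ?_)
  have h1 := hz.1
  have h2 := hz.2
  rw [← mul_assoc, ← ENNReal.ofReal_mul (by linarith), Real.sqrt_sq h1.le]
  congr 2
  field_simp

lemma conv_mu1 {a : ℝ} {k : ℝ → ENNReal} (hk : Measurable k)
    (ψ : ℝ → ENNReal) (hψ : Measurable ψ) :
    ∫⁻ v, ∫⁻ w, ψ (v + w) ∂(volume.withDensity k) ∂(mu1 a) =
      ∫⁻ t, ψ t ∂(volume.withDensity (TT a k)) := by
  have h1 : ∀ v, ∫⁻ w, ψ (v + w) ∂(volume.withDensity k) = ∫⁻ t, k (t - v) * ψ t := by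
    intro v
    rw [lintegral_withDensity_eq_lintegral_mul _ hk (by fun_prop),
      ← lintegral_sub_right_eq_self _ v]
    simp
  simp only [h1]
  rw [lint_mu1]
  swap
  · apply Measurable.lintegral_prod_right
    fun_prop
  rw [lintegral_withDensity_eq_lintegral_mul _ (meas_TT a hk) hψ]
  have h2 : ∀ z : ℝ, ENNReal.ofReal (2 * (a - z)) * ∫⁻ t, k (t - z ^ 2) * ψ t =
      ∫⁻ t, ENNReal.ofReal (2 * (a - z)) * k (t - z ^ 2) * ψ t := by
    intro z
    rw [← lintegral_const_mul _ (by fun_prop)]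
    simp only [mul_assoc]
  simp only [h2]
  rw [lintegral_lintegral_swap (Measurable.aemeasurable (by fun_prop))]
  congr 1
  ext t
  rw [lintegral_mul_const _ (by fun_prop)]
  rfl

instance (a : ℝ) : SFinite (mu1 a) := by unfold mu1; infer_instance

lemma three {a : ℝ} (ha : 0 < a) (ψ : ℝ → ENNReal) (hψ : Measurable ψ) :
    ∫⁻ u, ∫⁻ v, ∫⁻ w, ψ (u + (v + w)) ∂(mu1 a) ∂(mu1 a) ∂(mu1 a) =
      ∫⁻ t, TT a (TT a (kd a)) t * ψ t := by
  have h : ∀ u, ∫⁻ v, ∫⁻ w, ψ (u + (v + w)) ∂(mu1 a) ∂(mu1 a) =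
      ∫⁻ t, ψ (u + t) ∂(volume.withDensity (TT a (kd a))) := by
    intro u
    rw [← conv_mu1 (meas_kd a) (fun t => ψ (u + t)) (by fun_prop), ← mu1_eq ha]
  simp only [h]
  rw [conv_mu1 (meas_TT a (meas_kd a)) ψ hψ,
    lintegral_withDensity_eq_lintegral_mul _ (meas_TT a (meas_TT a (meas_kd a))) hψ]
  rfl

lemma TT_nonpos {a s : ℝ} (ha : 0 < a) (hs : s ≤ 0) : TT a (TT a (kd a)) s = 0 := by
  rw [TT, setLIntegral_congr_fun (g := fun _ => 0) measurableSet_Ioo, lintegral_zero]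
  intro z hz
  simp only
  rw [K2c ha (Or.inl (by nlinarith)), mul_zero]

lemma three' {a : ℝ} (ha : 0 < a) (φ : ℝ → ENNReal) (hφ : Measurable φ) :
    ∫⁻ u, ∫⁻ v, ∫⁻ w, φ (√(u + (v + w))) ∂(mu1 a) ∂(mu1 a) ∂(mu1 a) =
      ∫⁻ l, ENNReal.ofReal (a ^ 6) * ENNReal.ofReal (P a l) * φ l := by
  rw [three ha (fun t => φ √t) (by fun_prop)]
  have h1 : ∫⁻ t, TT a (TT a (kd a)) t * φ √t = ∫⁻ t in Ioi 0, TT a (TT a (kd a)) t * φ √t := by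
    rw [← lintegral_indicator measurableSet_Ioi]
    congr 1
    ext t
    by_cases ht : 0 < t
    · simp [indicator, ht]
    · simp [indicator, ht, TT_nonpos ha (not_lt.1 ht)]
  have h2 : ∫⁻ l, ENNReal.ofReal (a ^ 6) * ENNReal.ofReal (P a l) * φ l =
      ∫⁻ l in Ioi 0, ENNReal.ofReal (a ^ 6) * ENNReal.ofReal (P a l) * φ l := by
    rw [setLIntegral_congr Ioi_ae_eq_Ici, ← lintegral_indicator measurableSet_Ici]
    congr 1
    ext t
    by_cases ht : t < 0
    · simp [indicator, not_le.2 ht, P, ht]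
    · simp [indicator, not_lt.1 ht]
  rw [h1, h2, lint_sq_Ioi]
  refine setLIntegral_congr_fun measurableSet_Ioi (fun l hl => ?_)
  have hl' : 0 < l := hl
  rw [← mul_assoc, K3 ha hl', Real.sqrt_sq hl'.le]

instance (a : ℝ) : IsFiniteMeasure (mu1 a) := by unfold mu1; infer_instance

lemma mp_cube (a : ℝ) : MeasurePreserving (fun x : EuclideanSpace ℝ (Fin 3) => fun i => x i)
    (volume.restrict (cube a)) (Measure.pi fun _ : Fin 3 => volume.restrict (Icc 0 a)) := by
  have h := (PiLp.volume_preserving_ofLp (Fin 3)).restrict_preimage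
    (s := Set.univ.pi fun _ => Icc 0 a) (MeasurableSet.univ_pi fun _ => measurableSet_Icc)
  rw [volume_pi, Measure.restrict_pi_pi] at h
  have e : cube a = WithLp.ofLp ⁻¹' (univ.pi fun _ : Fin 3 => Icc 0 a) := by
    ext x
    simp only [cube, mem_ofPred_eq, mem_preimage, mem_univ_pi]
  rw [e]
  exact h

lemma mp_sq (a : ℝ) : MeasurePreserving
    (fun p : EuclideanSpace ℝ (Fin 3) × EuclideanSpace ℝ (Fin 3) =>
      fun i : Fin 3 => (p.1 i - p.2 i) ^ 2)
    ((volume.restrict (cube a)).prod (volume.restrict (cube a)))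
    (Measure.pi fun _ : Fin 3 => mu1 a) := by
  have h1 := (mp_cube a).prod (mp_cube a)
  have h2 := (measurePreserving_arrowProdEquivProdArrow ℝ ℝ (Fin 3)
    (fun _ => volume.restrict (Icc 0 a)) (fun _ => volume.restrict (Icc 0 a))).symm
  have h3 : MeasurePreserving (fun (x : Fin 3 → ℝ × ℝ) i => ((x i).1 - (x i).2) ^ 2)
      (Measure.pi fun _ : Fin 3 => (volume.restrict (Icc 0 a)).prod (volume.restrict (Icc 0 a)))
      (Measure.pi fun _ : Fin 3 => mu1 a) :=
    ⟨by fun_prop, Measure.pi_map_pi (f := fun _ (p : ℝ × ℝ) => (p.1 - p.2) ^ 2)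
      (fun i => Measurable.aemeasurable (by fun_prop))⟩
  exact h3.comp (h2.comp h1)

lemma mp_three (a : ℝ) : MeasurePreserving
    (fun x : Fin 3 → ℝ => (x 0, (x 1, x 2)))
    (Measure.pi fun _ : Fin 3 => mu1 a) ((mu1 a).prod ((mu1 a).prod (mu1 a))) := by
  have h1 := measurePreserving_piFinSuccAbove (fun _ : Fin 3 => mu1 a) 0
  have h2 := measurePreserving_piFinTwo (fun _ : Fin 2 => mu1 a)
  exact ((MeasurePreserving.id (mu1 a)).prod h2).comp h1

theorem pushforward_dist_eq (a : ℝ) (ha : 0 < a) :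
    Measure.map (fun p : EuclideanSpace ℝ (Fin 3) × EuclideanSpace ℝ (Fin 3) =>
        dist p.1 p.2)
      ((volume.restrict (cube a)).prod (volume.restrict (cube a))) =
      ENNReal.ofReal (a ^ 6) •
        volume.withDensity (fun l => ENNReal.ofReal (P a l)) := by
  have hP : Measurable (P a) := by
    unfold P P₁ P₂ P₃
    refine Measurable.ite (measurableSet_lt (by fun_prop) (by fun_prop)) (by fun_prop) ?_
    refine Measurable.ite (measurableSet_le (by fun_prop) (by fun_prop)) (by fun_prop) ?_
    refine Measurable.ite (measurableSet_le (by fun_prop) (by fun_prop)) (by fun_prop) ?_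
    refine Measurable.ite (measurableSet_le (by fun_prop) (by fun_prop)) (by fun_prop) (by fun_prop)
  apply Measure.ext_of_lintegral
  intro φ hφ
  rw [lintegral_map hφ (by fun_prop), lintegral_smul_measure,
    lintegral_withDensity_eq_lintegral_mul _ (by fun_prop) hφ]
  have h := (mp_three a).comp (mp_sq a)
  have h2 := h.lintegral_comp (f := fun x => φ (√(x.1 + (x.2.1 + x.2.2)))) (by fun_prop)
  rw [lintegral_prod (μ := mu1 a) _ (by fun_prop)] at h2
  have h3 : ∀ u, ∫⁻ y : ℝ × ℝ, φ (√(u + (y.1 + y.2))) ∂((mu1 a).prod (mu1 a)) =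
      ∫⁻ v, ∫⁻ w, φ (√(u + (v + w))) ∂(mu1 a) ∂(mu1 a) := fun u =>
    lintegral_prod _ (by fun_prop)
  simp only [h3] at h2
  rw [three' ha φ hφ] at h2
  rw [smul_eq_mul, ← lintegral_const_mul _ (by fun_prop)]
  refine Eq.trans (lintegral_congr fun p => ?_) (h2.trans (lintegral_congr fun l => ?_))
  · simp only [Function.comp, EuclideanSpace.dist_eq, Fin.sum_univ_three, Real.dist_eq, sq_abs,
      add_assoc]
  · simp only [Pi.mul_apply, mul_assoc]
end
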